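/- arXiv:1404.1056 — 4 statements merged into one kernel-verified Lean document; each statement's English description precedes it below -/
import Mathlib

section
/- For every k ∈ {6, 7, 8} and every input list L, First Fit with cardinality constraint k satisfies FF(L) ≤ (8/3 − 8/(3k))·OPT(L) + 8. Consequently, the asymptotic competitive ratio of First Fit for 6 ≤ k ≤ 8 is at most 8(k−1)/(3k). -/
/-!
The proof is a weighting argument. Put `σ = 1 - 4/k` and `τ = 2/3 + 1/(k-4)` (so `τ = 7/6, 1, 11/12`
for `k = 6, 7, 8`), and give an item of size `x` the weight `1/k + σ * val τ x`. Here `val τ` equals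
`3τ - 1` on `(1/2, 1]`, the clamped linear function `ramp` on `(0, 1/4]`, and `τ - ramp (1/2 - x)` on
`(1/4, 1/2]`; the jump at `1/4` is essential.

*Optimal side* (`opt_bin`). Items of total size at most `1` have total `val` at most `4τ - 1`: this
uses that `ramp` is superadditive on `[0, 1/4]`, so that items next to one of size `> 1/2` contribute
at most `τ`. A bin of an optimal packing has at most `k` items, hence total weight at most
`1 + σ(4τ - 1) = 8/3 - 8/(3k)`.

*First Fit side* (`ff_bin`). A bin with `k` items has weight at least `1` from the terms `1/k` alone.
If a bin with fewer than `k` items has final level `s`, all items of later bins are larger than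
`1 - s`. Hence for every `t`, at most one bin with fewer than `k` items has both level at most `1 - t`
and an item of size at most `t` (`count_bad`). Discarding one bin for each of the six thresholds
`t = 1/2, 1/3, 1/4, 1/6, 7/36, 5/36`, every remaining bin with `j < k` items has total `val` at least
`1 - (j - 4)(τ - 2/3) = (1 - j/k)/σ`, so its weight is at least `1`. Summing the weights of all items
in both ways gives `FF ≤ (8/3 - 8/(3k)) OPT + 6`.
-/


open scoped Classical
noncomputable section

/-- An input is a list of item sizes, each in (0,1]. -/
def ValidInput (L : List ℝ) : Prop := ∀ x ∈ L, 0 < x ∧ x ≤ 1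

/-- A packing assigns a bin index to each item; it is feasible for cardinality
constraint `k` if every bin receives at most `k` items of total size at most 1. -/
def IsFeasible (k : ℕ) (L : List ℝ) (f : Fin L.length → ℕ) : Prop :=
  ∀ b : ℕ,
    (Finset.univ.filter (fun i => f i = b)).card ≤ k ∧
    ∑ i ∈ Finset.univ.filter (fun i => f i = b), L.get i ≤ 1

/-- The number of bins used by a packing. -/
def binsUsed (L : List ℝ) (f : Fin L.length → ℕ) : ℕ :=
  (Finset.univ.image f).card

/-- The optimal (minimum) number of bins in a feasible packing of `L`. -/
def OPT (k : ℕ) (L : List ℝ) : ℕ :=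
  sInf {n | ∃ f : Fin L.length → ℕ, IsFeasible k L f ∧ binsUsed L f = n}

/-- A deterministic online algorithm is a strategy: given the items seen so far
(ending with the item to be packed), it returns the bin index for that item. -/
def onlinePacking (A : List ℝ → ℕ) (L : List ℝ) : Fin L.length → ℕ :=
  fun i => A (L.take (i.1 + 1))

/-- The strategy `A` is a valid online algorithm for cardinality constraint `k`
if on every valid input the induced packing is feasible. -/
def OnlineValid (k : ℕ) (A : List ℝ → ℕ) : Prop :=
  ∀ L : List ℝ, ValidInput L → IsFeasible k L (onlinePacking A L)

/-- The number of bins used by online algorithm `A` on input `L`. -/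
def onlineBins (A : List ℝ → ℕ) (L : List ℝ) : ℕ :=
  binsUsed L (onlinePacking A L)

/-- The state of First Fit: a list of open bins (in order of opening),
each recorded as (number of items, total size). `ffFind` returns the index of
the first bin that can receive an item of size `x` (it has at most `k-1` items
and the item fits); if none, the index of a new bin. -/
def ffFind (k : ℕ) (x : ℝ) : List (ℕ × ℝ) → ℕ
  | [] => 0
  | b :: bs => if b.1 < k ∧ b.2 + x ≤ 1 then 0 else ffFind k x bs + 1

/-- Update the First Fit state after packing an item of size `x`. -/
def ffUpdate (k : ℕ) (x : ℝ) : List (ℕ × ℝ) → List (ℕ × ℝ)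
  | [] => [(1, x)]
  | b :: bs =>
      if b.1 < k ∧ b.2 + x ≤ 1 then (b.1 + 1, b.2 + x) :: bs
      else b :: ffUpdate k x bs

/-- The final state of First Fit with cardinality constraint `k` on input `L`. -/
def ffState (k : ℕ) (L : List ℝ) : List (ℕ × ℝ) :=
  L.foldl (fun bs x => ffUpdate k x bs) []

/-- The number of bins used by First Fit with cardinality constraint `k` on `L`. -/
def FF (k : ℕ) (L : List ℝ) : ℕ := (ffState k L).length

/-- The bin index into which First Fit packs the `i`-th item of `L`. -/
def ffAssign (k : ℕ) (L : List ℝ) (i : Fin L.length) : ℕ :=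
  ffFind k (L.get i) (ffState k (L.take i.1))

/-! ### The weight function -/

/-- The function that is `0` up to `1/9`, rises with slope `3` to `1/3` at `2/9`, and is constant
afterwards. -/
def ramp (x : ℝ) : ℝ := max 0 (min (3 * x - 1 / 3) (1 / 3))

/-- The size-dependent part of the weight of an item, rescaled by `1 / (1 - 4/k)`; the parameter is
`τ = 2/3 + 1/(k-4)`. -/
def val (τ x : ℝ) : ℝ :=
  if x ≤ 1 / 4 then ramp x else if x ≤ 1 / 2 then τ - ramp (1 / 2 - x) else 3 * τ - 1

lemma ramp_nonneg (x : ℝ) : 0 ≤ ramp x := le_max_left _ _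

lemma ramp_le (x : ℝ) : ramp x ≤ 1 / 3 := max_le (by norm_num) (min_le_right _ _)

lemma ramp_small {x : ℝ} (h : x ≤ 1 / 9) : ramp x = 0 :=
  max_eq_left ((min_le_left _ _).trans (by linarith))

lemma ramp_lower {x : ℝ} (h : x ≤ 2 / 9) : 3 * x - 1 / 3 ≤ ramp x :=
  le_max_of_le_right (le_min le_rfl (by linarith))

lemma ramp_large {x : ℝ} (h : 2 / 9 ≤ x) : ramp x = 1 / 3 := by
  unfold ramp
  rw [min_eq_right (by linarith), max_eq_right (by norm_num)]

lemma ramp_upper {x : ℝ} (h : 1 / 9 ≤ x) : ramp x ≤ 3 * x - 1 / 3 :=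
  max_le (by linarith) (min_le_left _ _)

lemma ramp_mono {x y : ℝ} (h : x ≤ y) : ramp x ≤ ramp y := by
  unfold ramp
  gcongr

lemma ramp_linear {x : ℝ} (h : 0 ≤ x) : ramp x ≤ 3 / 2 * x := by
  rcases le_total x (1 / 9) with h1 | h1
  · rw [ramp_small h1]; linarith
  · rcases le_total x (2 / 9) with h2 | h2
    · have := ramp_upper h1; linarith
    · have := ramp_le x; linarith

lemma ramp_superadd {x y : ℝ} (hx : 0 ≤ x) (hy : 0 ≤ y) (h : x + y ≤ 1 / 4) :
    ramp x + ramp y ≤ ramp (x + y) := by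
  rcases le_total x (1 / 9) with h1 | h1
  · rw [ramp_small h1]
    have := ramp_mono (show y ≤ x + y by linarith)
    linarith
  · rcases le_total y (1 / 9) with h2 | h2
    · rw [ramp_small h2]
      have := ramp_mono (show x ≤ x + y by linarith)
      linarith
    · have := ramp_upper h1
      have := ramp_upper h2
      rw [ramp_large (x := x + y) (by linarith)]
      linarith

lemma val_small (τ : ℝ) {x : ℝ} (h : x ≤ 1 / 4) : val τ x = ramp x := if_pos h

lemma val_mid (τ : ℝ) {x : ℝ} (h : 1 / 4 < x) (h2 : x ≤ 1 / 2) :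
    val τ x = τ - ramp (1 / 2 - x) := by
  unfold val
  rw [if_neg (by linarith), if_pos h2]

lemma val_big (τ : ℝ) {x : ℝ} (h : 1 / 2 < x) : val τ x = 3 * τ - 1 := by
  unfold val
  rw [if_neg (by linarith), if_neg (by linarith)]

lemma val_nonneg {τ : ℝ} (hτ : 11 / 12 ≤ τ) (x : ℝ) : 0 ≤ val τ x := by
  unfold val
  split_ifs
  · exact ramp_nonneg x
  · have := ramp_le (1 / 2 - x); linarith
  · linarith

lemma sum_val_nonneg {τ : ℝ} (hτ : 11 / 12 ≤ τ) (M : Multiset ℝ) : 0 ≤ (M.map (val τ)).sum :=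
  Multiset.sum_nonneg (by
    intro x hx
    obtain ⟨y, -, rfl⟩ := Multiset.mem_map.1 hx
    exact val_nonneg hτ y)

/-! ### Total weight of a set of items of total size at most one -/

lemma msum_nonneg {M : Multiset ℝ} (h : ∀ x ∈ M, 0 < x) : 0 ≤ M.sum :=
  Multiset.sum_nonneg fun x hx => (h x hx).le

lemma sum_val_small_linear (τ : ℝ) (M : Multiset ℝ) (h0 : ∀ x ∈ M, 0 < x)
    (h : ∀ x ∈ M, x ≤ 1 / 4) : (M.map (val τ)).sum ≤ 3 / 2 * M.sum := by
  induction M using Multiset.induction with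
  | empty => simp
  | cons a M ih =>
    simp only [Multiset.mem_cons, forall_eq_or_imp] at h0 h
    have := ih h0.2 h.2
    have := ramp_linear h0.1.le
    rw [Multiset.map_cons, Multiset.sum_cons, Multiset.sum_cons, val_small τ h.1]
    linarith

lemma sum_val_small_superadd (τ : ℝ) (M : Multiset ℝ) (h0 : ∀ x ∈ M, 0 < x)
    (h : M.sum ≤ 1 / 4) : (M.map (val τ)).sum ≤ ramp M.sum := by
  induction M using Multiset.induction with
  | empty => simpa using ramp_nonneg 0
  | cons a M ih =>
    simp only [Multiset.mem_cons, forall_eq_or_imp] at h0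
    have hM := msum_nonneg h0.2
    rw [Multiset.sum_cons] at h
    have := ih h0.2 (by linarith)
    have := ramp_superadd h0.1.le hM h
    rw [Multiset.map_cons, Multiset.sum_cons, Multiset.sum_cons, val_small τ (by linarith)]
    linarith

lemma peel (c : ℝ) (M : Multiset ℝ) (h0 : ∀ x ∈ M, 0 < x) :
    (∀ x ∈ M, x ≤ c) ∨ ∃ a N, M = a ::ₘ N ∧ c < a ∧ 0 < a ∧ ∀ x ∈ N, 0 < x := by
  by_cases h : ∀ x ∈ M, x ≤ c
  · exact Or.inl h
  · push Not at h
    obtain ⟨a, ha, hc⟩ := h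
    obtain ⟨N, rfl⟩ := Multiset.exists_cons_of_mem ha
    exact Or.inr ⟨a, N, rfl, hc, h0 a ha, fun x hx => h0 x (Multiset.mem_cons_of_mem hx)⟩

/-- Items of total size less than `1/2`, as they accompany an item larger than `1/2`. -/
lemma half_bin {τ : ℝ} (hτ : 11 / 12 ≤ τ) (M : Multiset ℝ) (h0 : ∀ x ∈ M, 0 < x)
    (h : M.sum ≤ 1 / 2) : (M.map (val τ)).sum ≤ τ := by
  rcases peel (1 / 4) M h0 with hs | ⟨a, N, rfl, ha, -, hN⟩
  · have := sum_val_small_linear τ M h0 hs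
    linarith
  · rw [Multiset.sum_cons] at h
    have hN0 := msum_nonneg hN
    have := sum_val_small_superadd τ N hN (by linarith)
    have := ramp_mono (show N.sum ≤ 1 / 2 - a by linarith)
    rw [Multiset.map_cons, Multiset.sum_cons, val_mid τ ha (by linarith)]
    linarith

lemma ramp_cases (p : ℝ) : ramp p = 0 ∧ p ≤ 1 / 9 ∨
    (ramp p = 3 * p - 1 / 3 ∧ 1 / 9 ≤ p ∧ p ≤ 2 / 9) ∨ ramp p = 1 / 3 ∧ 2 / 9 ≤ p := by
  rcases le_total p (1 / 9) with h1 | h1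
  · exact Or.inl ⟨ramp_small h1, h1⟩
  · rcases le_total p (2 / 9) with h2 | h2
    · exact Or.inr (Or.inl ⟨le_antisymm (ramp_upper h1) (ramp_lower h2), h1, h2⟩)
    · exact Or.inr (Or.inr ⟨ramp_large h2, h2⟩)

/-- A bin of any feasible packing has total `val` at most `4τ - 1`. -/
lemma opt_bin {τ : ℝ} (hτ : 11 / 12 ≤ τ) (M : Multiset ℝ) (h0 : ∀ x ∈ M, 0 < x)
    (h : M.sum ≤ 1) : (M.map (val τ)).sum ≤ 4 * τ - 1 := by
  rcases peel (1 / 2) M h0 with hb | ⟨a, N, rfl, ha, -, hN⟩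
  swap
  · rw [Multiset.sum_cons] at h
    have := half_bin hτ N hN (by linarith)
    rw [Multiset.map_cons, Multiset.sum_cons, val_big τ ha]
    linarith
  rcases peel (1 / 4) M h0 with hs | ⟨a, M, rfl, ha, -, h0⟩
  · have := sum_val_small_linear τ M h0 hs
    linarith
  simp only [Multiset.mem_cons, forall_eq_or_imp] at hb
  obtain ⟨ha2, hb⟩ := hb
  rw [Multiset.sum_cons] at h
  rw [Multiset.map_cons, Multiset.sum_cons, val_mid τ ha ha2]
  have ra := ramp_nonneg (1 / 2 - a)
  rcases peel (1 / 4) M h0 with hs | ⟨b, M, rfl, hb1, -, h0⟩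
  · have := sum_val_small_linear τ M h0 hs
    linarith
  simp only [Multiset.mem_cons, forall_eq_or_imp] at hb
  obtain ⟨hb2, hb⟩ := hb
  rw [Multiset.sum_cons] at h
  rw [Multiset.map_cons, Multiset.sum_cons, val_mid τ hb1 hb2]
  have rb := ramp_nonneg (1 / 2 - b)
  rcases peel (1 / 4) M h0 with hs | ⟨c, M, rfl, hc1, -, h0⟩
  · have := sum_val_small_linear τ M h0 hs
    linarith
  simp only [Multiset.mem_cons, forall_eq_or_imp] at hb
  obtain ⟨hc2, hb⟩ := hb
  rw [Multiset.sum_cons] at h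
  rw [Multiset.map_cons, Multiset.sum_cons, val_mid τ hc1 hc2]
  have h1 := msum_nonneg h0
  have h2 := sum_val_small_superadd τ M h0 (by linarith)
  have h3 := ramp_linear h1
  rcases ramp_cases (1 / 2 - a) with h4 | h4 | h4 <;>
  rcases ramp_cases (1 / 2 - b) with h5 | h5 | h5 <;>
  rcases ramp_cases (1 / 2 - c) with h6 | h6 | h6 <;>
  linarith

/-! ### Total weight of a First Fit bin -/

lemma split_pred (p : ℝ → Prop) (M : Multiset ℝ) :
    ∃ A B, M = A + B ∧ (∀ x ∈ A, p x) ∧ ∀ x ∈ B, ¬ p x :=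
  ⟨M.filter p, M.filter (fun x => ¬ p x), (Multiset.filter_add_not p M).symm,
    fun _ hx => (Multiset.mem_filter.1 hx).2, fun _ hx => (Multiset.mem_filter.1 hx).2⟩

lemma sum_val_low (τ : ℝ) (M : Multiset ℝ) (h : ∀ x ∈ M, x ≤ 2 / 9) :
    3 * M.sum - M.card / 3 ≤ (M.map (val τ)).sum := by
  induction M using Multiset.induction with
  | empty => simp
  | cons a M ih =>
    simp only [Multiset.mem_cons, forall_eq_or_imp] at h
    have := ih h.2
    have := ramp_lower h.1
    rw [Multiset.map_cons, Multiset.sum_cons, Multiset.sum_cons, val_small τ (by linarith [h.1]),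
      Multiset.card_cons]
    push_cast
    linarith

lemma sum_val_high (τ c : ℝ) (M : Multiset ℝ) (h : ∀ x ∈ M, c ≤ val τ x) :
    M.card * c ≤ (M.map (val τ)).sum := by
  have := Multiset.card_nsmul_le_sum (s := M.map (val τ)) (a := c) (by
    intro x hx
    obtain ⟨y, hy, rfl⟩ := Multiset.mem_map.1 hx
    exact h y hy)
  simpa [nsmul_eq_mul] using this

lemma sum_ge_card (c : ℝ) (M : Multiset ℝ) (h : ∀ x ∈ M, c ≤ x) : M.card * c ≤ M.sum := by
  simpa [nsmul_eq_mul] using Multiset.card_nsmul_le_sum h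

lemma sum_le_card (c : ℝ) (M : Multiset ℝ) (h : ∀ x ∈ M, x ≤ c) : M.sum ≤ M.card * c := by
  simpa [nsmul_eq_mul] using Multiset.sum_le_card_nsmul M c h

/-- A bin of level at most `1 - t` containing an item of size at most `t`. -/
def Bad (t : ℝ) (M : Multiset ℝ) : Prop := M.sum ≤ 1 - t ∧ ∃ x ∈ M, x ≤ t

lemma not_bad {t : ℝ} {M : Multiset ℝ} (h : ¬ Bad t M) : 1 - t < M.sum ∨ ∀ x ∈ M, t < x := by
  by_contra! hc
  exact h hc

set_option maxHeartbeats 2000000 in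
/-- A bin without items larger than `1/4`. The numbers `nC`, `nD` count the items above and below
`2/9`, with total sizes `sC`, `sD`, and `w` is the total `ramp` of the latter. -/
lemma arith0 {τ : ℝ} (hτ : 11 / 12 ≤ τ) (nC nD : ℕ) (h1 : 1 ≤ nC + nD)
    (h7 : nC + nD ≤ 7) (sC sD w : ℝ) (hC : sC ≤ nC * (1 / 4)) (hD : sD ≤ nD * (2 / 9))
    (hw0 : 0 ≤ w) (hw : 3 * sD - nD / 3 ≤ w) (b4 : 1 - 1 / 4 < sC + sD)
    (b6 : 1 - 1 / 6 < sC + sD ∨ nD * (1 / 6) ≤ sD)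
    (b7 : 1 - 7 / 36 < sC + sD ∨ nD * (7 / 36) ≤ sD)
    (b5 : 1 - 5 / 36 < sC + sD ∨ nD * (5 / 36) ≤ sD) :
    1 - (((nC + nD : ℕ) : ℝ) - 4) * (τ - 2 / 3) ≤ nC * (1 / 3) + w := by
  have hC7 : nC ≤ 7 := by omega
  have hD7 : nD ≤ 7 := by omega
  interval_cases nC <;> interval_cases nD <;> first | omega | skip
  all_goals
    norm_num at hC hD hw b4 b6 b7 b5 ⊢
    first
    | linarith
    | rcases b6 with b6 | b6 <;> first
      | linarith
      | rcases b7 with b7 | b7 <;> first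
        | linarith
        | rcases b5 with b5 | b5 <;> linarith

set_option maxHeartbeats 2000000 in
/-- A bin with exactly one item larger than `1/4`, of size `1/2 - p`; `r` is the value of `ramp p`.
The other quantities are as in `arith0`. -/
lemma arith1 {τ : ℝ} (hτ : 11 / 12 ≤ τ) (nC nD : ℕ)
    (h7 : 1 + nC + nD ≤ 7) (p r sC sD w : ℝ) (hC' : nC * (2 / 9) ≤ sC)
    (hC : sC ≤ nC * (1 / 4))
    (hD : sD ≤ nD * (2 / 9)) (hp0 : 0 ≤ p) (hp4 : p < 1 / 4)
    (hr : r = 0 ∧ p ≤ 1 / 9 ∨ (r = 3 * p - 1 / 3 ∧ 1 / 9 ≤ p ∧ p ≤ 2 / 9) ∨ r = 1 / 3 ∧ 2 / 9 ≤ p)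
    (hw0 : 0 ≤ w) (hw : 3 * sD - nD / 3 ≤ w)
    (b4 : 1 - 1 / 4 < 1 / 2 - p + sC + sD)
    (b6 : 1 - 1 / 6 < 1 / 2 - p + sC + sD ∨ nD * (1 / 6) ≤ sD)
    (b5 : 1 - 5 / 36 < 1 / 2 - p + sC + sD ∨ nD * (5 / 36) ≤ sD) :
    1 - (((1 + nC + nD : ℕ) : ℝ) - 4) * (τ - 2 / 3) ≤ τ - r + nC * (1 / 3) + w := by
  have hC7 : nC ≤ 7 := by omega
  have hD7 : nD ≤ 7 := by omega
  interval_cases nC <;> interval_cases nD <;> first | omega | skip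
  all_goals
    norm_num at hC hC' hD hw b4 b6 b5 ⊢
    rcases hr with ⟨hr, hr'⟩ | ⟨hr, hr', hr''⟩ | ⟨hr, hr'⟩ <;> first
    | linarith
    | rcases b6 with b6 | b6 <;> first
      | linarith
      | rcases b5 with b5 | b5 <;> linarith

lemma val_ge_of_quarter {τ x : ℝ} (h : 1 / 4 < x) (h2 : x ≤ 1 / 2) : τ - 1 / 3 ≤ val τ x := by
  rw [val_mid τ h h2]
  have := ramp_le (1 / 2 - x)
  linarith

/-- A bin with `j ≤ 7` items that is not exceptional for any of the six thresholds has total `val` at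
least `1 - (j - 4) * (τ - 2/3)`. For `τ = 2/3 + 1/(k - 4)` this is `(1 - j/k) / (1 - 4/k)`. -/
lemma ff_bin {τ : ℝ} (hτ : 11 / 12 ≤ τ) (M : Multiset ℝ) (h0 : ∀ x ∈ M, 0 < x)
    (h1 : 1 ≤ M.card) (h7 : M.card ≤ 7)
    (b2 : ¬ Bad (1 / 2) M) (b3 : ¬ Bad (1 / 3) M) (b4 : ¬ Bad (1 / 4) M) (b6 : ¬ Bad (1 / 6) M)
    (b7 : ¬ Bad (7 / 36) M) (b5 : ¬ Bad (5 / 36) M) :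
    1 - ((M.card : ℝ) - 4) * (τ - 2 / 3) ≤ (M.map (val τ)).sum := by
  have hcard : (1 : ℝ) ≤ M.card := by exact_mod_cast h1
  rcases peel (1 / 2) M h0 with hb | ⟨a, N, rfl, ha, -, hN⟩
  swap
  · have := sum_val_nonneg hτ N
    rw [Multiset.map_cons, Multiset.sum_cons, val_big τ ha]
    nlinarith
  replace b2 : 1 / 2 < M.sum := by
    rcases not_bad b2 with h | h
    · linarith
    · obtain ⟨x, hx⟩ := Multiset.card_pos_iff_exists_mem.1 (by omega : 0 < M.card)
      exact absurd (h x hx) (not_lt.2 (hb x hx))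
  replace b3 := not_bad b3
  replace b4 := not_bad b4
  replace b6 := not_bad b6
  replace b7 := not_bad b7
  replace b5 := not_bad b5
  obtain ⟨A, Q, rfl, hA, hQ⟩ := split_pred (fun x => 1 / 4 < x) M
  obtain ⟨C, D, rfl, hC, hD⟩ := split_pred (fun x => 2 / 9 < x) Q
  simp only [not_lt, Multiset.mem_add] at hQ hD
  have hA2 : ∀ x ∈ A, x ≤ 1 / 2 := fun x hx => hb x (by simp [hx])
  have hvA := sum_val_high τ (τ - 1 / 3) A fun x hx => val_ge_of_quarter (hA x hx) (hA2 x hx)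
  have hvC := sum_val_high τ (1 / 3) C fun x hx => by
    rw [val_small τ (hQ x (Or.inl hx)), ramp_large (hC x hx).le]
  have hvD := sum_val_low τ D hD
  have hvD0 := sum_val_nonneg hτ D
  have hvC0 := sum_val_nonneg hτ C
  have hsC := sum_le_card (1 / 4) C fun x hx => hQ x (Or.inl hx)
  have hsC' := sum_ge_card (2 / 9) C fun x hx => (hC x hx).le
  have hsD := sum_le_card (2 / 9) D hD
  have key : ∀ t : ℝ, (∀ x ∈ A + (C + D), t < x) → D.card * t ≤ D.sum := fun t h =>
    sum_ge_card t D fun x hx => (h x (by simp [hx])).le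
  simp only [Multiset.map_add, Multiset.sum_add, Multiset.card_add] at *
  replace b6 := b6.imp_right (key _)
  replace b7 := b7.imp_right (key _)
  replace b5 := b5.imp_right (key _)
  have b4' : 1 ≤ C.card + D.card → 1 - 1 / 4 < A.sum + (C.sum + D.sum) := by
    intro hn
    rcases b4 with h | h
    · exact h
    · obtain ⟨x, hx⟩ := Multiset.card_pos_iff_exists_mem.1
        (by rw [Multiset.card_add]; omega : 0 < (C + D).card)
      have hx' := Multiset.mem_add.1 hx
      exact absurd (h x (by rw [Multiset.mem_add]; exact Or.inr hx)) (not_lt.2 (hQ x hx'))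
  have hA01 : A.card = 0 ∨ A.card = 1 ∨ A.card = 2 ∨ 3 ≤ A.card := by omega
  rcases hA01 with hn | hn | hn | hn
  · obtain rfl := Multiset.card_eq_zero.1 hn
    simp only [Multiset.sum_zero, Multiset.card_zero, Multiset.map_zero, zero_add] at *
    have := arith0 hτ C.card D.card h1 h7 C.sum D.sum _ hsC hsD hvD0 hvD (b4' h1) b6 b7 b5
    linarith
  · obtain ⟨a, rfl⟩ := Multiset.card_eq_one.1 hn
    simp only [Multiset.mem_singleton, forall_eq, Multiset.sum_singleton, Multiset.map_singleton,
      Multiset.card_singleton] at *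
    have ha : a = 1 / 2 - (1 / 2 - a) := by ring
    have hCD : 1 ≤ C.card + D.card := by
      by_contra hc
      have hC0 : C = 0 := Multiset.card_eq_zero.1 (by omega)
      have hD0 : D = 0 := Multiset.card_eq_zero.1 (by omega)
      subst hC0 hD0
      simp at b2
      linarith
    rw [val_mid τ hA hA2]
    have := arith1 hτ C.card D.card (by omega) (1 / 2 - a) _ C.sum D.sum _ hsC' hsC hsD
      (by linarith) (by linarith) (ramp_cases _) hvD0 hvD (by linarith [b4' hCD])
      (b6.imp_left fun h => by linarith) (b5.imp_left fun h => by linarith)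
    push_cast at *
    linarith
  · obtain ⟨a, b, rfl⟩ := Multiset.card_eq_two.1 hn
    have hva : ∀ x ∈ ({a, b} : Multiset ℝ), val τ x = τ - ramp (1 / 2 - x) := fun x hx =>
      val_mid τ (hA x hx) (hA2 x hx)
    simp only [Multiset.insert_eq_cons, Multiset.mem_cons, Multiset.mem_singleton,
      forall_eq_or_imp, forall_eq, Multiset.map_cons, Multiset.sum_cons, Multiset.sum_singleton,
      Multiset.map_singleton, Multiset.card_cons, Multiset.card_singleton] at *
    have hj : C.card + D.card = 0 ∨ (C.card = 1 ∧ D.card = 0) ∨ (C.card = 0 ∧ D.card = 1) ∨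
      2 ≤ C.card + D.card := by omega
    rcases hj with hj | hj | hj | hj
    · have hC0 : C = 0 := Multiset.card_eq_zero.1 (by omega)
      have hD0 : D = 0 := Multiset.card_eq_zero.1 (by omega)
      subst hC0 hD0
      simp only [Multiset.sum_zero, Multiset.card_zero, Multiset.map_zero, add_zero,
        Multiset.notMem_zero, or_false] at *
      rw [hva.1, hva.2]
      push_cast
      rcases b3 with b3 | b3
      · rcases ramp_cases (1 / 2 - a) with h4 | h4 | h4 <;>
        rcases ramp_cases (1 / 2 - b) with h5 | h5 | h5 <;> linarith
      · have e1 := b3 a (by simp)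
        have e2 := b3 b (by simp)
        rcases ramp_cases (1 / 2 - a) with h4 | h4 | h4 <;>
        rcases ramp_cases (1 / 2 - b) with h5 | h5 | h5 <;> linarith
    · have hc1 : (C.card : ℝ) = 1 := by rw [hj.1]; norm_num
      have hd1 : (D.card : ℝ) = 0 := by rw [hj.2]; norm_num
      push_cast at *
      rw [hc1] at hvC ⊢
      rw [hd1]
      linarith
    · have b4 := b4' (by omega)
      have hc1 : (C.card : ℝ) = 0 := by rw [hj.1]; norm_num
      have hd1 : (D.card : ℝ) = 1 := by rw [hj.2]; norm_num
      rw [hva.1, hva.2]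
      push_cast
      rw [hc1] at hsC ⊢
      rw [hd1] at hsD hvD ⊢
      rcases ramp_cases (1 / 2 - a) with h4 | h4 | h4 <;>
      rcases ramp_cases (1 / 2 - b) with h5 | h5 | h5 <;> linarith
    · have : (2 : ℝ) ≤ C.card + D.card := by exact_mod_cast hj
      push_cast at *
      nlinarith
  · have : (3 : ℝ) ≤ A.card := by exact_mod_cast hn
    have hC0 : (0 : ℝ) ≤ C.card := Nat.cast_nonneg _
    have hD0 : (0 : ℝ) ≤ D.card := Nat.cast_nonneg _
    push_cast at *
    nlinarith

/-! ### The contents of the First Fit bins -/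

/-- First Fit with the full contents of each bin recorded. -/
def binsUpdate (k : ℕ) (x : ℝ) : List (List ℝ) → List (List ℝ)
  | [] => [[x]]
  | b :: bs => if b.length < k ∧ b.sum + x ≤ 1 then (x :: b) :: bs else b :: binsUpdate k x bs

/-- The contents of the First Fit bins after packing the items of `L`. -/
def ffBins (k : ℕ) (L : List ℝ) : List (List ℝ) := L.foldl (fun bs x => binsUpdate k x bs) []

/-- An earlier bin `b` with fewer than `k` items has no room for any item of a later bin `c`. -/
def NoRoom (k : ℕ) (b c : List ℝ) : Prop := b.length < k → ∀ x ∈ c, 1 < b.sum + x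

lemma map_binsUpdate (k : ℕ) (x : ℝ) (bs : List (List ℝ)) :
    (binsUpdate k x bs).map (fun b => (b.length, b.sum)) =
      ffUpdate k x (bs.map fun b => (b.length, b.sum)) := by
  induction bs with
  | nil => simp [binsUpdate, ffUpdate]
  | cons b bs ih =>
    simp only [binsUpdate, ffUpdate, List.map_cons]
    split_ifs
    · simp [add_comm]
    · simp [ih]

/-- The properties of the list of bins that First Fit maintains. -/
structure FFInv (k : ℕ) (bs : List (List ℝ)) : Prop where
  pos : ∀ b ∈ bs, ∀ x ∈ b, 0 < x
  card : ∀ b ∈ bs, 1 ≤ b.length ∧ b.length ≤ k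
  noRoom : bs.Pairwise (NoRoom k)

lemma noRoom_update {k : ℕ} {x : ℝ} {b : List ℝ} {bs : List (List ℝ)}
    (h : ∀ c ∈ bs, NoRoom k b c) (hx : b.length < k → 1 < b.sum + x) :
    ∀ c ∈ binsUpdate k x bs, NoRoom k b c := by
  induction bs with
  | nil =>
    intro c hc hb y hy
    simp only [binsUpdate, List.mem_singleton] at hc
    subst hc
    rw [List.mem_singleton.1 hy]
    exact hx hb
  | cons d bs ih =>
    simp only [List.mem_cons, forall_eq_or_imp] at h
    unfold binsUpdate
    split_ifs
    · simp only [List.mem_cons, forall_eq_or_imp]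
      refine ⟨fun hb y hy => ?_, h.2⟩
      rcases List.mem_cons.1 hy with rfl | hy
      · exact hx hb
      · exact h.1 hb y hy
    · simp only [List.mem_cons, forall_eq_or_imp]
      exact ⟨h.1, ih h.2⟩

lemma inv_update {k : ℕ} (hk : 1 ≤ k) {x : ℝ} (hx : 0 < x) {bs : List (List ℝ)}
    (h : FFInv k bs) : FFInv k (binsUpdate k x bs) := by
  induction bs with
  | nil => exact ⟨by simp [binsUpdate, hx], by simp [binsUpdate, hk], by simp [binsUpdate]⟩
  | cons b bs ih =>
    obtain ⟨hp, hc, hn⟩ := h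
    simp only [List.mem_cons, forall_eq_or_imp] at hp hc
    rw [List.pairwise_cons] at hn
    unfold binsUpdate
    split_ifs with hif
    · refine ⟨?_, ?_, ?_⟩
      · simp only [List.mem_cons, forall_eq_or_imp]
        exact ⟨⟨hx, hp.1⟩, hp.2⟩
      · simp only [List.mem_cons, forall_eq_or_imp, List.length_cons]
        exact ⟨⟨by omega, by omega⟩, hc.2⟩
      · rw [List.pairwise_cons]
        refine ⟨fun c hcm hl y hy => ?_, hn.2⟩
        have := hn.1 c hcm hif.1 y hy
        rw [List.sum_cons]
        linarith
    · obtain ⟨ip, ic, ir⟩ := ih ⟨hp.2, hc.2, hn.2⟩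
      refine ⟨?_, ?_, ?_⟩
      · simp only [List.mem_cons, forall_eq_or_imp]
        exact ⟨hp.1, ip⟩
      · simp only [List.mem_cons, forall_eq_or_imp]
        exact ⟨hc.1, ic⟩
      · rw [List.pairwise_cons]
        refine ⟨noRoom_update hn.1 fun hl => ?_, ir⟩
        by_contra hcon
        exact hif ⟨hl, not_lt.1 hcon⟩

lemma sum_update (g : ℝ → ℝ) (k : ℕ) (x : ℝ) (bs : List (List ℝ)) :
    ((binsUpdate k x bs).map fun b => (b.map g).sum).sum =
      g x + (bs.map fun b => (b.map g).sum).sum := by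
  induction bs with
  | nil => simp [binsUpdate]
  | cons b bs ih =>
    unfold binsUpdate
    split_ifs
    · simp [add_assoc]
    · simp only [List.map_cons, List.sum_cons, ih]
      ring

lemma ffBins_spec (k : ℕ) (hk : 1 ≤ k) (g : ℝ → ℝ) (L : List ℝ) (hL : ∀ x ∈ L, 0 < x) :
    FFInv k (ffBins k L) ∧ (ffBins k L).map (fun b => (b.length, b.sum)) = ffState k L ∧
      ((ffBins k L).map fun b => (b.map g).sum).sum = (L.map g).sum := by
  induction L using List.reverseRecOn with
  | nil => exact ⟨⟨by simp [ffBins], by simp [ffBins], by simp [ffBins]⟩, rfl, by simp [ffBins]⟩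
  | append_singleton L x ih =>
    obtain ⟨h1, h2, h3⟩ := ih fun y hy => hL y (by simp [hy])
    have e1 : ffBins k (L ++ [x]) = binsUpdate k x (ffBins k L) := by simp [ffBins]
    have e2 : ffState k (L ++ [x]) = ffUpdate k x (ffState k L) := by simp [ffState]
    rw [e1, e2]
    refine ⟨inv_update hk (hL x (by simp)) h1, ?_, ?_⟩
    · rw [map_binsUpdate, h2]
    · rw [sum_update, h3]
      simp [add_comm]

/-- Indicator of the exceptional bins with fewer than `k` items for the threshold `t`. -/
def badInd (k : ℕ) (t : ℝ) (b : List ℝ) : ℝ := if b.length < k ∧ Bad t (b : Multiset ℝ) then 1 else 0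

/-- For each threshold at most one bin is exceptional. -/
lemma count_bad (k : ℕ) (t : ℝ) (bs : List (List ℝ)) (h : bs.Pairwise (NoRoom k)) :
    (bs.map (badInd k t)).sum ≤ 1 := by
  induction bs with
  | nil => simp
  | cons b bs ih =>
    rw [List.pairwise_cons] at h
    rw [List.map_cons, List.sum_cons]
    by_cases hb : b.length < k ∧ Bad t (b : Multiset ℝ)
    · have hz : (bs.map (badInd k t)).sum = 0 := by
        refine List.sum_eq_zero fun y hy => ?_
        obtain ⟨c, hc, rfl⟩ := List.mem_map.1 hy
        refine if_neg ?_
        rintro ⟨-, -, x, hx, hxt⟩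
        have h1 := h.1 c hc hb.1 x (by simpa using hx)
        have h2 := hb.2.1
        rw [Multiset.sum_coe] at h2
        linarith
      rw [hz, badInd, if_pos hb]
      norm_num
    · have := ih h.2
      rw [badInd, if_neg hb]
      linarith

/-- The total number of exceptions at a bin, over the six thresholds of `ff_bin`. -/
def exc (k : ℕ) (b : List ℝ) : ℝ :=
  badInd k (1 / 2) b + badInd k (1 / 3) b + badInd k (1 / 4) b + badInd k (1 / 6) b +
    badInd k (7 / 36) b + badInd k (5 / 36) b

lemma badInd_nonneg (k : ℕ) (t : ℝ) (b : List ℝ) : 0 ≤ badInd k t b := by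
  unfold badInd
  split_ifs <;> norm_num

lemma sum_exc (k : ℕ) (bs : List (List ℝ)) (h : bs.Pairwise (NoRoom k)) :
    (bs.map (exc k)).sum ≤ 6 := by
  have e : (bs.map (exc k)).sum = (bs.map (badInd k (1 / 2))).sum +
      (bs.map (badInd k (1 / 3))).sum + (bs.map (badInd k (1 / 4))).sum +
      (bs.map (badInd k (1 / 6))).sum + (bs.map (badInd k (7 / 36))).sum +
      (bs.map (badInd k (5 / 36))).sum := by
    unfold exc
    simp only [List.sum_map_add]
  have := count_bad k (1 / 2) bs h
  have := count_bad k (1 / 3) bs h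
  have := count_bad k (1 / 4) bs h
  have := count_bad k (1 / 6) bs h
  have := count_bad k (7 / 36) bs h
  have := count_bad k (5 / 36) bs h
  linarith

lemma not_bad_of_exc {k : ℕ} {b : List ℝ} (hb : b.length < k) (h : exc k b < 1) :
    ¬ Bad (1 / 2) (b : Multiset ℝ) ∧ ¬ Bad (1 / 3) (b : Multiset ℝ) ∧
    ¬ Bad (1 / 4) (b : Multiset ℝ) ∧ ¬ Bad (1 / 6) (b : Multiset ℝ) ∧
    ¬ Bad (7 / 36) (b : Multiset ℝ) ∧ ¬ Bad (5 / 36) (b : Multiset ℝ) := by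
  have key : ∀ t, badInd k t b < 1 → ¬ Bad t (b : Multiset ℝ) := by
    intro t ht hbad
    rw [badInd, if_pos ⟨hb, hbad⟩] at ht
    exact lt_irrefl _ ht
  have h1 := badInd_nonneg k (1 / 2) b
  have h2 := badInd_nonneg k (1 / 3) b
  have h3 := badInd_nonneg k (1 / 4) b
  have h4 := badInd_nonneg k (1 / 6) b
  have h5 := badInd_nonneg k (7 / 36) b
  have h6 := badInd_nonneg k (5 / 36) b
  unfold exc at h
  refine ⟨key _ ?_, key _ ?_, key _ ?_, key _ ?_, key _ ?_, key _ ?_⟩ <;> linarith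

/-- The weight of an item of size `x`. -/
def wt (k : ℕ) (x : ℝ) : ℝ := 1 / k + (1 - 4 / k) * val (2 / 3 + 1 / (k - 4)) x

lemma sum_wt (k : ℕ) (b : List ℝ) : (b.map (wt k)).sum =
    b.length / k + (1 - 4 / k) * (b.map (val (2 / 3 + 1 / (k - 4)))).sum := by
  induction b with
  | nil => simp
  | cons x b ih =>
    rw [List.map_cons, List.sum_cons, ih, wt, List.map_cons, List.sum_cons, List.length_cons]
    push_cast
    ring

lemma tau_ge {k : ℕ} (hk : k = 6 ∨ k = 7 ∨ k = 8) : (11 / 12 : ℝ) ≤ 2 / 3 + 1 / ((k : ℝ) - 4) := by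
  rcases hk with rfl | rfl | rfl <;> norm_num

lemma bin_weight {k : ℕ} (hk : k = 6 ∨ k = 7 ∨ k = 8) (b : List ℝ) (h0 : ∀ x ∈ b, 0 < x)
    (h1 : 1 ≤ b.length) (hlen : b.length ≤ k) : 1 ≤ (b.map (wt k)).sum + exc k b := by
  have hτ := tau_ge hk
  have hv : 0 ≤ (b.map (val (2 / 3 + 1 / ((k : ℝ) - 4)))).sum := by
    simpa using sum_val_nonneg hτ (b : Multiset ℝ)
  have hσ : (0 : ℝ) ≤ 1 - 4 / k := by rcases hk with rfl | rfl | rfl <;> norm_num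
  have hwt := sum_wt k b
  have he : 0 ≤ exc k b := by
    unfold exc
    have := badInd_nonneg k
    have h1 := this (1 / 2) b
    have h2 := this (1 / 3) b
    have h3 := this (1 / 4) b
    have h4 := this (1 / 6) b
    have h5 := this (7 / 36) b
    have h6 := this (5 / 36) b
    linarith
  have hmul := mul_nonneg hσ hv
  rcases hlen.eq_or_lt with hl | hl
  · have : (b.length : ℝ) / k = 1 := by
      rw [hl]
      rcases hk with rfl | rfl | rfl <;> norm_num
    linarith
  · rcases le_or_gt 1 (exc k b) with hx | hx
    · have : (0 : ℝ) ≤ b.length / k := by positivity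
      linarith
    · obtain ⟨b2, b3, b4, b6, b7, b5⟩ := not_bad_of_exc hl hx
      have := ff_bin hτ (b : Multiset ℝ) (by simpa using h0) (by simpa using h1)
        (by rw [Multiset.coe_card]; omega) b2 b3 b4 b6 b7 b5
      rw [Multiset.coe_card, Multiset.map_coe, Multiset.sum_coe] at this
      have hm := mul_le_mul_of_nonneg_left this hσ
      have e : (1 - 4 / (k : ℝ)) * (1 - ((b.length : ℝ) - 4) * (2 / 3 + 1 / ((k : ℝ) - 4) - 2 / 3))
          = 1 - b.length / k := by
        rcases hk with rfl | rfl | rfl <;> norm_num <;> ring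
      linarith

lemma ff_le_weight {k : ℕ} (hk : k = 6 ∨ k = 7 ∨ k = 8) (L : List ℝ) (hL : ∀ x ∈ L, 0 < x) :
    (FF k L : ℝ) ≤ (L.map (wt k)).sum + 6 := by
  obtain ⟨hI, hs, hw⟩ := ffBins_spec k (by omega) (wt k) L hL
  have hlen : FF k L = (ffBins k L).length := by rw [FF, ← hs, List.length_map]
  have h1 : ((ffBins k L).map fun _ => (1 : ℝ)).sum ≤
      ((ffBins k L).map fun b => (b.map (wt k)).sum + exc k b).sum :=
    List.sum_le_sum fun b hb => bin_weight hk b (hI.pos b hb) (hI.card b hb).1 (hI.card b hb).2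
  rw [List.sum_map_add, hw] at h1
  have h2 := sum_exc k _ hI.noRoom
  have h3 : ((ffBins k L).map fun _ => (1 : ℝ)).sum = (ffBins k L).length := by simp
  rw [hlen, ← h3]
  linarith

/-! ### Comparison with an optimal packing -/

lemma opt_attained {k : ℕ} (hk : 1 ≤ k) (L : List ℝ) (hL : ValidInput L) :
    ∃ f : Fin L.length → ℕ, IsFeasible k L f ∧ binsUsed L f = OPT k L := by
  refine Nat.sInf_mem (s := {n | ∃ f : Fin L.length → ℕ, IsFeasible k L f ∧ binsUsed L f = n})
    ⟨_, fun i => i.1, fun b => ?_, rfl⟩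
  -- each item alone in its own bin
  have hc : (Finset.univ.filter (fun i : Fin L.length => i.1 = b)).card ≤ 1 :=
    Finset.card_le_one.2 fun x hx y hy => by
      simp only [Finset.mem_filter, Finset.mem_univ, true_and] at hx hy
      exact Fin.ext (hx.trans hy.symm)
  refine ⟨hc.trans hk, ?_⟩
  change ∑ i ∈ Finset.univ.filter (fun i : Fin L.length => i.1 = b), L.get i ≤ 1
  rcases Nat.le_one_iff_eq_zero_or_eq_one.1 hc with h | h
  · rw [Finset.card_eq_zero.1 h]
    simp
  · obtain ⟨x, hx⟩ := Finset.card_eq_one.1 h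
    rw [hx, Finset.sum_singleton]
    exact (hL _ (List.get_mem L x)).2

lemma weight_le {k : ℕ} (hk : k = 6 ∨ k = 7 ∨ k = 8) (L : List ℝ) (hL : ValidInput L)
    (f : Fin L.length → ℕ) (hf : IsFeasible k L f) :
    (L.map (wt k)).sum ≤ ((8 / 3 : ℝ) - 8 / (3 * k)) * (binsUsed L f : ℝ) := by
  have hτ := tau_ge hk
  have hσ : (0 : ℝ) ≤ 1 - 4 / k := by rcases hk with rfl | rfl | rfl <;> norm_num
  have e1 : (L.map (wt k)).sum = ∑ i : Fin L.length, wt k (L.get i) := by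
    conv_lhs => rw [← List.ofFn_get L]
    rw [List.map_ofFn, List.sum_ofFn]
    rfl
  have e2 : ∑ i : Fin L.length, wt k (L.get i) = ∑ b ∈ Finset.univ.image f,
      ∑ i ∈ Finset.univ.filter (fun i => f i = b), wt k (L.get i) :=
    (Finset.sum_fiberwise_of_maps_to (fun i _ => Finset.mem_image_of_mem f (Finset.mem_univ i))
      _).symm
  rw [e1, e2, binsUsed, mul_comm, ← nsmul_eq_mul]
  refine Finset.sum_le_card_nsmul _ _ _ fun b _ => ?_
  obtain ⟨hcard, hsum⟩ := hf b
  set S := Finset.univ.filter (fun i => f i = b)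
  have h1 := opt_bin hτ (S.val.map L.get) (by
      intro x hx
      obtain ⟨i, -, rfl⟩ := Multiset.mem_map.1 hx
      exact (hL _ (List.get_mem L i)).1) hsum
  rw [Multiset.map_map] at h1
  have h2 : ∑ i ∈ S, wt k (L.get i) = S.card * (1 / k) +
      (1 - 4 / k) * ∑ i ∈ S, val (2 / 3 + 1 / ((k : ℝ) - 4)) (L.get i) := by
    simp only [wt, Finset.sum_add_distrib, Finset.mul_sum, Finset.sum_const, nsmul_eq_mul]
  have h3 : (1 - 4 / (k : ℝ)) * ∑ i ∈ S, val (2 / 3 + 1 / ((k : ℝ) - 4)) (L.get i) ≤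
      (1 - 4 / (k : ℝ)) * (4 * (2 / 3 + 1 / ((k : ℝ) - 4)) - 1) :=
    mul_le_mul_of_nonneg_left h1 hσ
  have h4 : (S.card : ℝ) ≤ k := by exact_mod_cast hcard
  rw [h2]
  rcases hk with rfl | rfl | rfl <;> norm_num at h3 ⊢ <;>
    simp only [Nat.cast_ofNat] at h4 <;> linarith

/-- For k ∈ {6,7,8} and every input `L`,
FF(L) ≤ (8/3 − 8/(3k))·OPT(L) + 8: the asymptotic competitive ratio of First Fit
for 6 ≤ k ≤ 8 is at most 8(k−1)/(3k). -/
theorem ff_k678_ub (k : ℕ) (hk : k = 6 ∨ k = 7 ∨ k = 8) (L : List ℝ)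
    (hL : ValidInput L) :
    (FF k L : ℝ) ≤ ((8 / 3 : ℝ) - 8 / (3 * k)) * (OPT k L : ℝ) + 8 := by
  obtain ⟨f, hf, hO⟩ := opt_attained (k := k) (by omega) L hL
  have h1 := ff_le_weight hk L fun x hx => (hL x hx).1
  have h2 := weight_le hk L hL f hf
  rw [hO] at h2
  linarith
end
end

section
/- For k = 9 and every input list L, First Fit with cardinality constraint k satisfies FF(L) ≤ (64/27)·OPT(L) + 7. Consequently, the asymptotic competitive ratio of First Fit for k = 9 is at most 64/27. -/
/-!
The proof is a weighting argument. In units of 1/27 of a bin, an item of size `x` gets the weight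
`weight x = 3 + bonus x`, where `bonus` is a nonnegative piecewise linear function of the size.

*Any feasible bin weighs at most 64.* It holds at most 9 items, which contribute at most 27 through
the constant 3, so it is enough that the bonuses of items of total size at most 1 sum to at most 37
(`sum_bonus_bin`). An item larger than 1/2 has bonus 24, and items of total size at most 1/2 have
total bonus at most 13 (`sum_bonus_half`), because `bonus` is superadditive on `(0, 1/4]` and
`bonus x + bonus y ≤ 13` whenever `x > 1/4` and `x + y ≤ 1/2`. Without an item larger than 1/2,
the estimate `bonus x ≤ 32 x` suffices. Hence the total weight is at most `64 * OPT`.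

*The `N` bins of First Fit weigh at least `27 N - 189` in total.* A bin with 9 items weighs at
least 27. For the other bins, taken in order of opening, let `t` be the smallest level of the
earlier ones (`t = 1` for the first). Every item of the current bin exceeds `1 - t`. The weight of
the current bin is at least 27 minus the amount by which `potential` grows when `t` is replaced by
the new minimum (`bin_weight`). As `potential` vanishes at 1 and is at most 189 on `[0, 1]`, the
losses telescope to at most 189 (`totalWeight_ge`). For a bin that does not lower the minimum,
adding a copy of its smallest item would overfill it; the content of `list_weight` is that such a
bin weighs at least 27, up to a linear error term in the amount by which this condition fails.

Together, `27 * FF - 189 ≤ 64 * OPT`, and `189 / 27 = 7`.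
-/

open scoped Classical
noncomputable section

/-! ### The weight function -/

/-- The size-dependent part of the weight of an item of size `x`. It is continuous on `(0, 1/2]`
except for a jump from 5 to 8 at 1/4. The pieces on `(0, 1/4]` and `(1/4, 1/2]` are chosen so that
`bonus x + bonus (1/2 - x) = 13` for `1/4 < x < 1/2`, while `bonus x + bonus (1 - 2 x) = 21`
for `1/4 < x ≤ 1/3`; two items weighing 27 in total have total bonus 21. -/
def bonus (x : ℝ) : ℝ :=
  if x ≤ 1 / 12 then 10 * x
  else if x ≤ 1 / 6 then 20 * x - 5 / 6
  else if x ≤ 5 / 24 then 40 * x - 25 / 6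
  else if x ≤ 1 / 4 then 20 * x
  else if x ≤ 7 / 24 then 20 * x + 3
  else if x ≤ 1 / 3 then 40 * x - 17 / 6
  else if x ≤ 5 / 12 then 20 * x + 23 / 6
  else if x ≤ 1 / 2 then 10 * x + 8
  else 24

/-- The weight of an item of size `x`, in units of 1/27 of a bin. -/
def weight (x : ℝ) : ℝ := 3 + bonus x

lemma bonus_big {x : ℝ} (h : 1 / 2 < x) : bonus x = 24 := by
  unfold bonus
  split_ifs <;> linarith

lemma bonus_nonneg {x : ℝ} (h : 0 < x) : 0 ≤ bonus x := by
  unfold bonus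
  split_ifs <;> linarith

lemma bonus_cases {x : ℝ} (h : x ≤ 1 / 2) :
    (x ≤ 1 / 12 ∧ bonus x = 10 * x) ∨
    (1 / 12 < x ∧ x ≤ 1 / 6 ∧ bonus x = 20 * x - 5 / 6) ∨
    (1 / 6 < x ∧ x ≤ 5 / 24 ∧ bonus x = 40 * x - 25 / 6) ∨
    (5 / 24 < x ∧ x ≤ 1 / 4 ∧ bonus x = 20 * x) ∨
    (1 / 4 < x ∧ x ≤ 7 / 24 ∧ bonus x = 20 * x + 3) ∨
    (7 / 24 < x ∧ x ≤ 1 / 3 ∧ bonus x = 40 * x - 17 / 6) ∨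
    (1 / 3 < x ∧ x ≤ 5 / 12 ∧ bonus x = 20 * x + 23 / 6) ∨
    (5 / 12 < x ∧ bonus x = 10 * x + 8) := by
  unfold bonus
  split_ifs <;> grind

/-- A linear minorant that is good enough for bins with at least five items. -/
lemma bonus_ge_linear {x : ℝ} (h0 : 0 < x) (h : x ≤ 1 / 2) : 20 * x - 5 / 6 ≤ bonus x := by
  unfold bonus
  split_ifs <;> linarith

/-- Here and in the next lemmas `E` bounds the room that is left in the bin after a copy of its
smallest item has been added. -/
lemma two_items {a b E : ℝ} (h0 : 1 / 4 < a) (hab : a ≤ b) (hb : b ≤ 1 / 2)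
    (hE : 0 ≤ E) (hm : 1 - (a + b) - a ≤ E) :
    27 - 135 * E ≤ weight a + weight b := by
  unfold weight
  rcases bonus_cases (hab.trans hb) with h | h | h | h | h | h | h | h <;>
  rcases bonus_cases hb with h' | h' | h' | h' | h' | h' | h' | h' <;>
  linarith

lemma three_items {a b c E : ℝ} (h0 : 0 < a) (hab : a ≤ b) (hbc : b ≤ c) (hc : c ≤ 1 / 2)
    (hs : 3 / 4 < a + b + c)
    (hE : 0 ≤ E) (hm : 1 - (a + b + c) - a ≤ E) :
    27 - 135 * E ≤ weight a + weight b + weight c := by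
  unfold weight
  rcases bonus_cases hc with h | h | h | h | h | h | h | h <;> try linarith
  all_goals
    rcases bonus_cases (hbc.trans hc) with h' | h' | h' | h' | h' | h' | h' | h' <;> try linarith
  all_goals
    rcases bonus_cases (hab.trans (hbc.trans hc)) with k | k | k | k | k | k | k | k <;>
    linarith

lemma bonus_ge_of_quarter_lt {x : ℝ} (h0 : 1 / 4 < x) (h : x ≤ 1 / 2) :
    20 * x + 3 ≤ bonus x := by
  unfold bonus
  split_ifs <;> linarith

/-- On `(0, 1/4]`, `bonus x` is at least the minimum of `40 x - 25/6` and `20 x`. -/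
lemma bonus_ge_min {x : ℝ} (h : x ≤ 1 / 4) :
    40 * x - 25 / 6 ≤ bonus x ∧ x ≤ 5 / 24 ∨ 20 * x ≤ bonus x ∧ 5 / 24 ≤ x := by
  unfold bonus
  split_ifs <;> grind

/-- With an item larger than 1/4 the linear minorants suffice; otherwise the bound is attained in
the limit by sizes such as `1/6, 1/6, 1/4, 1/4`. -/
lemma four_items {a b c d E : ℝ} (h0 : 0 < a) (hab : a ≤ b) (hbc : b ≤ c) (hcd : c ≤ d)
    (hd : d ≤ 1 / 2) (hE : 0 ≤ E) (hm : 1 - (a + b + c + d) - a ≤ E) :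
    27 - 135 * E ≤ weight a + weight b + weight c + weight d := by
  unfold weight
  rcases lt_or_ge (1 / 4) d with h | h
  · have := bonus_ge_linear h0 (by linarith)
    have := bonus_ge_linear (x := b) (by linarith) (by linarith)
    have := bonus_ge_linear (x := c) (by linarith) (by linarith)
    have := bonus_ge_of_quarter_lt h hd
    linarith
  · rcases bonus_ge_min (x := a) (by linarith) with ha | ha <;>
    rcases bonus_ge_min (x := b) (by linarith) with hb | hb <;>
    rcases bonus_ge_min (x := c) (by linarith) with hc | hc <;>
    rcases bonus_ge_min (x := d) (by linarith) with hd | hd <;>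
    linarith

lemma bonus_cases_small {x : ℝ} (h : x ≤ 1 / 4) :
    (x ≤ 1 / 12 ∧ bonus x = 10 * x) ∨
    (1 / 12 < x ∧ x ≤ 1 / 6 ∧ bonus x = 20 * x - 5 / 6) ∨
    (1 / 6 < x ∧ x ≤ 5 / 24 ∧ bonus x = 40 * x - 25 / 6) ∨
    (5 / 24 < x ∧ bonus x = 20 * x) := by
  unfold bonus
  split_ifs <;> grind

/-- `bonus x / x` is nondecreasing on `(0, 1/4]`, so `bonus` is superadditive there. -/
lemma bonus_superadd {x y : ℝ} (hx : 0 < x) (hy : 0 < y) (h : x + y ≤ 1 / 4) :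
    bonus x + bonus y ≤ bonus (x + y) := by
  rcases bonus_cases_small (x := x) (by linarith) with h | h | h | h <;>
  rcases bonus_cases_small (x := y) (by linarith) with h' | h' | h' | h' <;>
  rcases bonus_cases_small (x := x + y) (by linarith) with k | k | k | k <;>
  linarith

lemma bonus_pair {x y : ℝ} (hx : 1 / 4 < x) (hy : 0 < y) (h : x + y ≤ 1 / 2) :
    bonus x + bonus y ≤ 13 := by
  rcases bonus_cases (x := x) (by linarith) with h | h | h | h | h | h | h | h <;>
  rcases bonus_cases (x := y) (by linarith) with h' | h' | h' | h' | h' | h' | h' | h' <;>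
  linarith

lemma bonus_le_of_half {x : ℝ} (h0 : 0 < x) (h : x ≤ 1 / 2) : bonus x ≤ 32 * x ∧ bonus x ≤ 13 := by
  unfold bonus
  split_ifs <;> constructor <;> linarith

lemma bonus_le_of_quarter {x : ℝ} (h0 : 0 < x) (h : x ≤ 1 / 4) : bonus x ≤ 20 * x := by
  unfold bonus
  split_ifs <;> linarith

/-! ### Bins of an arbitrary packing -/

lemma sum_bonus_le_bonus_sum {ι : Type*} (S : Finset ι) (g : ι → ℝ) (hg : ∀ i ∈ S, 0 < g i)
    (hne : S.Nonempty) (hs : ∑ i ∈ S, g i ≤ 1 / 4) :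
    ∑ i ∈ S, bonus (g i) ≤ bonus (∑ i ∈ S, g i) := by
  induction hne using Finset.Nonempty.cons_induction with
  | singleton a => simp
  | cons a s ha hne ih =>
    rw [Finset.sum_cons] at hs ⊢
    rw [Finset.sum_cons]
    have h1 : 0 < g a := hg a (by simp)
    have h2 : ∀ i ∈ s, 0 < g i := fun i hi => hg i (by simp [hi])
    have h3 : 0 < ∑ i ∈ s, g i := Finset.sum_pos h2 hne
    have := ih h2 (by linarith)
    have := bonus_superadd h1 h3 hs
    linarith

lemma sum_bonus_half {ι : Type*} (S : Finset ι) (g : ι → ℝ) (hg : ∀ i ∈ S, 0 < g i)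
    (hs : ∑ i ∈ S, g i ≤ 1 / 2) : ∑ i ∈ S, bonus (g i) ≤ 13 := by
  classical
  by_cases hbig : ∃ i ∈ S, 1 / 4 < g i
  · obtain ⟨i, hi, hgi⟩ := hbig
    rw [← Finset.add_sum_erase S _ hi] at hs ⊢
    have hpos : ∀ j ∈ S.erase i, 0 < g j := fun j hj => hg j (Finset.mem_of_mem_erase hj)
    rcases (S.erase i).eq_empty_or_nonempty with he | hne
    · rw [he] at hs ⊢
      simp only [Finset.sum_empty, add_zero] at hs ⊢
      exact (bonus_le_of_half (by linarith) hs).2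
    · have h1 := sum_bonus_le_bonus_sum _ g hpos hne (by linarith)
      have h2 := bonus_pair hgi (Finset.sum_pos hpos hne) hs
      linarith
  · push Not at hbig
    have h1 : ∑ i ∈ S, bonus (g i) ≤ ∑ i ∈ S, 20 * g i :=
      Finset.sum_le_sum fun i hi => bonus_le_of_quarter (hg i hi) (hbig i hi)
    rw [← Finset.mul_sum] at h1
    linarith

lemma sum_bonus_bin {ι : Type*} (S : Finset ι) (g : ι → ℝ) (hg : ∀ i ∈ S, 0 < g i)
    (hs : ∑ i ∈ S, g i ≤ 1) : ∑ i ∈ S, bonus (g i) ≤ 37 := by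
  classical
  by_cases hbig : ∃ i ∈ S, 1 / 2 < g i
  · obtain ⟨i, hi, hgi⟩ := hbig
    rw [← Finset.add_sum_erase S _ hi] at hs ⊢
    have h1 := sum_bonus_half (S.erase i) g
      (fun j hj => hg j (Finset.mem_of_mem_erase hj)) (by linarith)
    rw [bonus_big hgi]
    linarith
  · push Not at hbig
    have h1 : ∑ i ∈ S, bonus (g i) ≤ ∑ i ∈ S, 32 * g i :=
      Finset.sum_le_sum fun i hi => (bonus_le_of_half (hg i hi) (hbig i hi)).1
    rw [← Finset.mul_sum] at h1
    linarith

lemma weight_le_opt (L : List ℝ) (hL : ValidInput L) :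
    (L.map weight).sum ≤ 64 * (OPT 9 L : ℝ) := by
  have hne : {n | ∃ f : Fin L.length → ℕ, IsFeasible 9 L f ∧ binsUsed L f = n}.Nonempty := by
    -- one bin per item
    refine ⟨_, fun i => i.1, fun b => ?_, rfl⟩
    have hc : (Finset.univ.filter (fun i : Fin L.length => i.1 = b)).card ≤ 1 := by
      refine Finset.card_le_one.2 fun i hi j hj => ?_
      simp only [Finset.mem_filter, Finset.mem_univ, true_and] at hi hj
      exact Fin.ext (hi.trans hj.symm)
    refine ⟨hc.trans (by norm_num), ?_⟩
    have h1 := Finset.sum_le_card_nsmul (Finset.univ.filter (fun i : Fin L.length => i.1 = b))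
      (fun i => L.get i) 1 (fun i _ => (hL _ (List.get_mem L i)).2)
    refine h1.trans ?_
    rw [nsmul_eq_mul, mul_one]
    exact_mod_cast hc
  obtain ⟨f, hf, hn⟩ := Nat.sInf_mem hne
  have hopt : OPT 9 L = (Finset.univ.image f).card := hn.symm
  have hsum : (L.map weight).sum = ∑ i : Fin L.length, weight (L.get i) := by
    simp
  rw [hsum, hopt, ← Finset.sum_fiberwise_of_maps_to (t := Finset.univ.image f) (g := f)
    (fun i _ => Finset.mem_image_of_mem f (Finset.mem_univ i))]
  have := Finset.sum_le_card_nsmul (Finset.univ.image f)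
    (fun b => ∑ i ∈ Finset.univ.filter (fun i => f i = b), weight (L.get i)) 64 ?_
  · rw [nsmul_eq_mul] at this
    linarith
  · intro b _
    obtain ⟨hc, hs⟩ := hf b
    have h1 := sum_bonus_bin _ (fun i => L.get i) (fun i _ => (hL _ (List.get_mem L i)).1) hs
    simp only [weight, Finset.sum_add_distrib, Finset.sum_const, nsmul_eq_mul]
    have : ((Finset.univ.filter (fun i => f i = b)).card : ℝ) ≤ 9 := by exact_mod_cast hc
    linarith

/-! ### First Fit with the contents of the bins recorded -/

/-- One step of First Fit, on bins given by the lists of their items. -/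
def ffPut (k : ℕ) (x : ℝ) : List (List ℝ) → List (List ℝ)
  | [] => [[x]]
  | B :: Bs => if B.length < k ∧ B.sum + x ≤ 1 then (x :: B) :: Bs else B :: ffPut k x Bs

lemma ffUpdate_map (k : ℕ) (x : ℝ) (Bs : List (List ℝ)) :
    ffUpdate k x (Bs.map fun B => (B.length, B.sum)) =
      (ffPut k x Bs).map fun B => (B.length, B.sum) := by
  induction Bs with
  | nil => simp [ffUpdate, ffPut]
  | cons B Bs ih =>
    simp only [List.map_cons, ffUpdate, ffPut]
    split_ifs
    · simp [add_comm]
    · simp [ih]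

/-- The First Fit property of two bins `B`, `B'` opened in this order: unless `B` is full, no item
of `B'` fits into `B`. -/
def Refuses (k : ℕ) (B B' : List ℝ) : Prop := B.length = k ∨ ∀ y ∈ B', 1 - B.sum < y

/-- The invariants of a First Fit packing into bins given by their item lists. -/
structure FFInv_s14 (k : ℕ) (Bs : List (List ℝ)) : Prop where
  ne_nil : ∀ B ∈ Bs, B ≠ []
  length_le : ∀ B ∈ Bs, B.length ≤ k
  pos : ∀ B ∈ Bs, ∀ y ∈ B, 0 < y
  refuses : Bs.Pairwise (Refuses k)

lemma mem_ffPut {k : ℕ} {x : ℝ} {Bs : List (List ℝ)} {B : List ℝ} (h : B ∈ ffPut k x Bs) :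
    B ∈ Bs ∨ B = [x] ∨ ∃ B' ∈ Bs, B'.length < k ∧ B = x :: B' := by
  induction Bs with
  | nil => simpa [ffPut] using h
  | cons C Cs ih =>
    rw [ffPut] at h
    split_ifs at h with hc
    · rcases List.mem_cons.1 h with rfl | h
      · exact Or.inr (Or.inr ⟨C, by simp, hc.1, rfl⟩)
      · exact Or.inl (by simp [h])
    · rcases List.mem_cons.1 h with rfl | h
      · exact Or.inl (by simp)
      · rcases ih h with h | h | ⟨B', h, h'⟩
        · exact Or.inl (by simp [h])
        · exact Or.inr (Or.inl h)
        · exact Or.inr (Or.inr ⟨B', by simp [h], h'⟩)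

lemma refuses_ffPut {k : ℕ} {x : ℝ} (hx : 0 < x) {Bs : List (List ℝ)}
    (hk : ∀ B ∈ Bs, B.length ≤ k) (h : Bs.Pairwise (Refuses k)) :
    (ffPut k x Bs).Pairwise (Refuses k) := by
  induction Bs with
  | nil => simp [ffPut]
  | cons C Cs ih =>
    rw [List.pairwise_cons] at h
    rw [ffPut]
    split_ifs with hc
    · refine List.pairwise_cons.2 ⟨fun B' hB' => Or.inr fun y hy => ?_, h.2⟩
      rcases h.1 B' hB' with h1 | h1
      · omega
      · have := h1 y hy
        rw [List.sum_cons]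
        linarith
    · refine List.pairwise_cons.2 ⟨fun B' hB' => ?_, ih (fun B hB => hk B (by simp [hB])) h.2⟩
      by_cases hl : C.length = k
      · exact Or.inl hl
      have hlt : C.length < k := lt_of_le_of_ne (hk C (by simp)) hl
      have hx' : 1 - C.sum < x := by
        by_contra hcon
        exact hc ⟨hlt, by linarith⟩
      rcases mem_ffPut hB' with h1 | rfl | ⟨D, hD, -, rfl⟩
      · exact h.1 B' h1
      · exact Or.inr (by simpa using hx')
      · rcases h.1 D hD with h2 | h2
        · exact Or.inl h2
        · refine Or.inr fun y hy => ?_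
          rcases List.mem_cons.1 hy with rfl | hy
          · exact hx'
          · exact h2 y hy

lemma FFInv_s14.ffPut {k : ℕ} (hk : 1 ≤ k) {x : ℝ} (hx : 0 < x) {Bs : List (List ℝ)}
    (h : FFInv_s14 k Bs) : FFInv_s14 k (ffPut k x Bs) where
  ne_nil B hB := by
    rcases mem_ffPut hB with h1 | rfl | ⟨D, hD, -, rfl⟩
    · exact h.ne_nil B h1
    · simp
    · simp
  length_le B hB := by
    rcases mem_ffPut hB with h1 | rfl | ⟨D, hD, hl, rfl⟩
    · exact h.length_le B h1
    · simpa using hk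
    · simpa using hl
  pos B hB := by
    rcases mem_ffPut hB with h1 | rfl | ⟨D, hD, hl, rfl⟩
    · exact h.pos B h1
    · simpa using hx
    · intro y hy
      rcases List.mem_cons.1 hy with rfl | hy
      · exact hx
      · exact h.pos D hD y hy
  refuses := refuses_ffPut hx h.length_le h.refuses

/-- Total weight of a packing. -/
def totalWeight (Bs : List (List ℝ)) : ℝ := (Bs.map fun B => (B.map weight).sum).sum

lemma totalWeight_ffPut (k : ℕ) (x : ℝ) (Bs : List (List ℝ)) :
    totalWeight (ffPut k x Bs) = weight x + totalWeight Bs := by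
  induction Bs with
  | nil => simp [ffPut, totalWeight]
  | cons C Cs ih =>
    simp only [totalWeight, ffPut] at ih ⊢
    split_ifs
    · simp [add_assoc]
    · simp only [List.map_cons, List.sum_cons, ih]
      ring

/-- The packing produced by First Fit, with the contents of its bins. -/
lemma exists_packing (k : ℕ) (hk : 1 ≤ k) (L : List ℝ) (hL : ∀ x ∈ L, 0 < x) :
    ∃ Bs : List (List ℝ), FFInv_s14 k Bs ∧ Bs.length = FF k L ∧
      totalWeight Bs = (L.map weight).sum := by
  suffices H : ∀ Cs : List (List ℝ), FFInv_s14 k Cs → ∃ Bs : List (List ℝ), FFInv_s14 k Bs ∧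
      Bs.map (fun B => (B.length, B.sum)) =
        L.foldl (fun bs x => ffUpdate k x bs) (Cs.map fun B => (B.length, B.sum)) ∧
      totalWeight Bs = totalWeight Cs + (L.map weight).sum by
    obtain ⟨Bs, h1, h2, h3⟩ := H [] ⟨by simp, by simp, by simp, by simp⟩
    refine ⟨Bs, h1, ?_, by simpa [totalWeight] using h3⟩
    rw [FF, ffState, ← List.length_map (f := fun B : List ℝ => (B.length, B.sum)), h2]
    rfl
  induction L with
  | nil => exact fun Cs h => ⟨Cs, h, rfl, by simp⟩
  | cons x L ih =>
    intro Cs h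
    obtain ⟨Bs, h1, h2, h3⟩ := ih (fun y hy => hL y (by simp [hy])) _
      (h.ffPut hk (hL x (by simp)))
    refine ⟨Bs, h1, ?_, ?_⟩
    · rw [h2, List.foldl_cons, ffUpdate_map]
    · rw [h3, totalWeight_ffPut, List.map_cons, List.sum_cons]
      ring

/-! ### Weight of the First Fit bins -/

/-- The potential paying for bins of weight below 27, as a function of the lowest level of a
non-full bin seen so far. The jump at 3/4 pays for a first bin of level at most 3/4 that contains
an item of size at most 1/4, and the jump at 1/2 for a first bin of level at most 1/2; the linear
part pays for bins that lower the minimum within one of the remaining ranges. -/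
def potential (t : ℝ) : ℝ :=
  135 * (1 - t) + (if t ≤ 3 / 4 then 27 else 0) + (if t ≤ 1 / 2 then 27 else 0)

lemma weight_nonneg {B : List ℝ} (hp : ∀ y ∈ B, 0 < y) : 0 ≤ (B.map weight).sum := by
  refine List.sum_nonneg fun w hw => ?_
  obtain ⟨y, hy, rfl⟩ := List.mem_map.1 hw
  have := bonus_nonneg (hp y hy)
  unfold weight
  linarith

/-- A non-full bin with items of size at most 1/2 weighs at least 27, up to a multiple of the room
`E` left after adding a copy of any of its items. Level at most 1/2, and level at most 3/4 together
with an item of size at most 1/4, are excluded: they can occur only once in a First Fit packing. -/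
lemma list_weight {B : List ℝ} {E : ℝ} (hne : B ≠ []) (hlen : B.length ≤ 8) (hp : ∀ y ∈ B, 0 < y)
    (hh : ∀ y ∈ B, y ≤ 1 / 2) (hs : 1 / 2 < B.sum)
    (hq : 3 / 4 < B.sum ∨ ∀ y ∈ B, 1 / 4 < y) (hE : 0 ≤ E) (hm : ∀ y ∈ B, 1 - B.sum - y ≤ E) :
    27 - 135 * E ≤ (B.map weight).sum := by
  wlog hsort : B.Pairwise (· ≤ ·) generalizing B
  · have hperm := List.perm_insertionSort (· ≤ ·) B
    have hmem : ∀ y, y ∈ B.insertionSort (· ≤ ·) ↔ y ∈ B := fun y => hperm.mem_iff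
    have := this (B := B.insertionSort (· ≤ ·))
      (fun h => hne (by rw [h] at hperm; exact hperm.symm.eq_nil)) (by rwa [hperm.length_eq])
      (by simpa only [hmem] using hp) (by simpa only [hmem] using hh) (by rwa [hperm.sum_eq])
      (by simpa only [hmem, hperm.sum_eq] using hq) (by simpa only [hmem, hperm.sum_eq] using hm)
      (List.pairwise_insertionSort (· ≤ ·) B)
    rwa [(hperm.map weight).sum_eq] at this
  by_cases h5 : 5 ≤ B.length
  -- With `m ≥ 5` items of total size `s`, averaging `hm` gives `s ≥ m (1 - E) / (m + 1)`.
  · have h1 : (B.map fun y => 3 + (20 * y - 5 / 6)).sum ≤ (B.map weight).sum :=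
      List.sum_le_sum fun y hy => by
        have := bonus_ge_linear (hp y hy) (hh y hy)
        unfold weight
        linarith
    have h2 : (B.map fun y => 1 - B.sum - y).sum ≤ (B.map fun _ => E).sum :=
      List.sum_le_sum hm
    have e1 : ∀ l : List ℝ, (l.map fun y => 3 + (20 * y - 5 / 6)).sum
        = 13 / 6 * l.length + 20 * l.sum := by
      intro l
      induction l with
      | nil => simp
      | cons a l ih => simp only [List.map_cons, List.sum_cons, List.length_cons, ih]; push_cast; ring
    have e2 : ∀ (c : ℝ) (l : List ℝ), (l.map fun y => c - y).sum = c * l.length - l.sum := by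
      intro c l
      induction l with
      | nil => simp
      | cons a l ih => simp only [List.map_cons, List.sum_cons, List.length_cons, ih]; push_cast; ring
    rw [e1] at h1
    rw [e2, List.map_const', List.sum_replicate, nsmul_eq_mul] at h2
    generalize B.length = m at *
    generalize B.sum = s at *
    interval_cases m <;> push_cast at h1 h2 <;> linarith
  · match B, hne with
    | [a], _ => simp at hs hh; linarith
    | [a, b], _ =>
      simp at *
      have := two_items (a := a) (b := b) (E := E)
        (by rcases hq with h | h <;> linarith) hsort (by linarith) hE (by linarith)
      linarith
    | [a, b, c], _ =>
      simp at *
      have := three_items (a := a) (b := b) (c := c) (E := E)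
        hp.1 hsort.1.1 hsort.2 (by linarith) (by rcases hq with h | h <;> linarith) hE (by linarith)
      linarith
    | [a, b, c, d], _ =>
      simp at *
      have := four_items (a := a) (b := b) (c := c) (d := d) (E := E)
        hp.1 hsort.1.1 hsort.2.1.1 hsort.2.2 (by linarith) hE (by linarith)
      linarith
    | _ :: _ :: _ :: _ :: _ :: _, _ => simp at h5

lemma potential_sub {a b : ℝ} (h : a ≤ b) : 135 * (b - a) ≤ potential a - potential b := by
  unfold potential
  split_ifs <;> linarith

/-- The weight that a non-full bin lacks is paid for by the growth of the potential when the
minimal level `t` of the earlier non-full bins is updated. -/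
lemma bin_weight_s14 {B : List ℝ} {t : ℝ} (hne : B ≠ []) (hlen : B.length ≤ 8)
    (hp : ∀ y ∈ B, 0 < y) (ht : ∀ y ∈ B, 1 - t < y) :
    27 - (potential (min B.sum t) - potential t) ≤ (B.map weight).sum := by
  have hw := weight_nonneg hp
  have hpot := potential_sub (min_le_right B.sum t)
  have hmin := min_le_right B.sum t
  by_cases hbig : ∃ y ∈ B, 1 / 2 < y
  · obtain ⟨y, hy, hy2⟩ := hbig
    have h1 : weight y ≤ (B.map weight).sum := by
      refine List.single_le_sum (fun w hw => ?_) _ (List.mem_map_of_mem hy)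
      obtain ⟨z, hz, rfl⟩ := List.mem_map.1 hw
      have := bonus_nonneg (hp z hz)
      unfold weight
      linarith
    rw [weight, bonus_big hy2] at h1
    linarith
  push Not at hbig
  obtain ⟨y₀, hy₀⟩ := List.exists_mem_of_ne_nil B hne
  by_cases hs : B.sum ≤ 1 / 2
  -- The items exceed `1 - t` and are at most 1/2, so the jump of the potential at 1/2 is crossed.
  · have h1 := ht y₀ hy₀
    have h2 := hbig y₀ hy₀
    rw [min_eq_left (by linarith)] at *
    have : potential t + 27 ≤ potential B.sum := by
      unfold potential
      split_ifs <;> linarith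
    linarith
  by_cases hq : 3 / 4 < B.sum ∨ ∀ y ∈ B, 1 / 4 < y
  · have := list_weight (E := max 0 (t - B.sum)) hne hlen hp hbig (not_le.1 hs) hq
      (le_max_left _ _) (fun y hy => le_max_of_le_right (by linarith [ht y hy]))
    have h2 : max 0 (t - B.sum) = t - min B.sum t := by
      rcases le_total t B.sum with h | h
      · rw [min_eq_right h, max_eq_left (by linarith)]
        ring
      · rw [min_eq_left h, max_eq_right (by linarith)]
    rw [h2] at this
    linarith
  · push Not at hq
    -- An item of size at most 1/4 forces `t > 3/4`, so the jump at 3/4 is crossed.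
    obtain ⟨hq1, y, hy, hy4⟩ := hq
    have h1 := ht y hy
    rw [min_eq_left (by linarith)] at *
    have : potential t + 27 ≤ potential B.sum := by
      unfold potential
      split_ifs <;> linarith
    linarith

lemma full_weight {B : List ℝ} (hp : ∀ y ∈ B, 0 < y) :
    3 * (B.length : ℝ) ≤ (B.map weight).sum := by
  have h : (B.map fun _ => (3 : ℝ)).sum ≤ (B.map weight).sum :=
    List.sum_le_sum fun y hy => by
      have := bonus_nonneg (hp y hy)
      unfold weight
      linarith
  rw [List.map_const', List.sum_replicate, nsmul_eq_mul] at h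
  linarith

lemma totalWeight_ge (Bs : List (List ℝ)) (hB : FFInv_s14 9 Bs) (t : ℝ) (ht0 : 0 ≤ t)
    (ht : ∀ B ∈ Bs, ∀ y ∈ B, 1 - t < y) :
    27 * (Bs.length : ℝ) - (189 - potential t) ≤ totalWeight Bs := by
  induction Bs generalizing t with
  | nil =>
    have : potential t ≤ 189 := by
      unfold potential
      split_ifs <;> linarith
    simp only [totalWeight, List.length_nil, List.map_nil, List.sum_nil]
    push_cast
    linarith
  | cons B Bs ih =>
    have href := List.pairwise_cons.1 hB.refuses
    have hB' : FFInv_s14 9 Bs :=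
      ⟨fun C hC => hB.ne_nil C (by simp [hC]), fun C hC => hB.length_le C (by simp [hC]),
        fun C hC => hB.pos C (by simp [hC]), href.2⟩
    have hmem : B ∈ B :: Bs := by simp
    have hpos := hB.pos B hmem
    have hcons : totalWeight (B :: Bs) = (B.map weight).sum + totalWeight Bs := by
      simp [totalWeight]
    have hlen : ((B :: Bs).length : ℝ) = Bs.length + 1 := by simp
    rw [hcons, hlen]
    by_cases h9 : B.length = 9
    · have h1 := full_weight hpos
      have h2 := ih hB' t ht0 (fun C hC => ht C (by simp [hC]))
      rw [h9] at h1
      push_cast at h1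
      linarith
    · have hl : B.length ≤ 8 := by
        have := hB.length_le B hmem
        omega
      have h1 := bin_weight_s14 (hB.ne_nil B hmem) hl hpos (ht B hmem)
      have h2 := ih hB' (min B.sum t)
        (le_min (List.sum_nonneg fun y hy => (hpos y hy).le) ht0) (fun C hC y hy => by
          have h3 := (href.1 C hC).resolve_left h9 y hy
          have h4 := ht C (by simp [hC]) y hy
          rcases min_choice B.sum t with h | h <;> rw [h] <;> assumption)
      linarith

/-- For k = 9 and every input `L`, FF(L) ≤ (64/27)·OPT(L) + 7: the
asymptotic competitive ratio of First Fit for k = 9 is at most 64/27. -/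
theorem ff_k9_ub (L : List ℝ) (hL : ValidInput L) :
    (FF 9 L : ℝ) ≤ (64 / 27 : ℝ) * (OPT 9 L : ℝ) + 7 := by
  obtain ⟨Bs, hinv, hlen, hw⟩ := exists_packing 9 (by norm_num) L fun x hx => (hL x hx).1
  have h1 := totalWeight_ge Bs hinv 1 zero_le_one
    (fun B hB y hy => by have := hinv.pos B hB y hy; linarith)
  have h2 := weight_le_opt L hL
  have h3 : potential 1 = 0 := by norm_num [potential]
  rw [hlen, hw, h3] at h1
  linarith
end
end

section
/- For every integer k ≥ 10 and every input list L, First Fit with cardinality constraint k satisfies FF(L) ≤ (2.7 − 3/k)·OPT(L) + 5. Consequently, the asymptotic competitive ratio of First Fit for k ≥ 10 is at most 2.7 − 3/k. -/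
/-! The proof assigns each item a weight that depends on its First Fit bin. An item in a bin that
received `k` items weighs `1/k`, so that such bins weigh `1`. Removing these bins leaves a First Fit
packing in which the cardinality constraint is never active, and there an item of size `s` weighs
`wgt h s`, a modification of the classical weight function for the ratio `1.7`.

* First Fit (`length_le_itemWgt`): going through the remaining bins in order, let `m` be the largest
  free space seen so far. All later items exceed `m`, and a bin lighter than `1` must raise `m`
  enough for a bounded potential `pot m` to pay for it (`bin_amortized`). Hence the number of bins
  exceeds the total weight by at most `16/5`.
* Optimum (`sum_itemWgt_bin`): a bin with `n` items of the second kind has at most `k - n` of the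
  first, so it weighs at most `2.7 - 3/k` as soon as `n` items that fit together weigh at most
  `1.7 + (n - 3)/k` (`sum_wgt_bin`).

The classical weights give the bound `1.7` for all `n`, which is too weak only for `n = 2`, for items slightly
above and slightly below `1/2`. Hence the weight of items of size at most `1/2` is capped. The bins
that suffer are those with one capped item and one item slightly above `1/4`; for `k < 20` the
weight just above `1/4` is raised and the weight just below `1/4` is lowered (`h = 1/36`), which
keeps triples below `1.7` and uses the slack `1/k` for sets of four or more items. -/

open scoped Classical
noncomputable section

namespace FFProof

/-! ### The weight function -/

/-- The weight of an item of size `s`. For `h = 0` this is the classical First Fit weight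
(`6/5 * s` plus a bonus), except that items of size at most `1/2` are capped at `13/20`. A positive
`h` lowers the cap and replaces the weight on `(1/4 - h, 1/4 + h]` by a step: the weight decreases
below `1/4` and increases above. Throughout, `0 ≤ h ≤ 1/36`. -/
def wgt (h s : ℝ) : ℝ :=
  if s ≤ 1/6 then 6/5*s
  else if s ≤ 1/4 - h then 9/5*s - 1/10
  else if s ≤ 1/4 then 7/20 - 9/5*h
  else if s ≤ 1/4 + h then 7/20 + 9/5*h
  else if s ≤ 1/3 then 9/5*s - 1/10
  else if s ≤ 1/2 then min (6/5*s + 1/10) (13/20 - 9/5*h)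
  else 1

section weight

variable {h s m : ℝ}

lemma wgt_big (h0 : 0 ≤ h) (h1 : h ≤ 1/36) (hs : 1/2 < s) : wgt h s = 1 := by
  unfold wgt
  split_ifs <;> linarith

lemma wgt_ge (h0 : 0 ≤ h) (h1 : h ≤ 1/36) (hs : s ≤ 1/2) : 6/5*s ≤ wgt h s := by
  unfold wgt
  split_ifs <;> first | linarith | exact le_min (by linarith) (by linarith)

lemma wgt_nonneg (h0 : 0 ≤ h) (h1 : h ≤ 1/36) (hs : 0 < s) : 0 ≤ wgt h s := by
  rcases le_or_gt s (1/2) with h2 | h2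
  · linarith [wgt_ge h0 h1 h2]
  · rw [wgt_big h0 h1 h2]; norm_num

lemma wgt_fifth (h0 : 0 ≤ h) (h1 : h ≤ 1/36) (hs : 1/6 < s) : 1/5 ≤ wgt h s := by
  unfold wgt
  split_ifs <;> first | linarith | exact le_min (by linarith) (by linarith)

lemma wgt_quarter (h0 : 0 ≤ h) (h1 : h ≤ 1/36) (hs : 1/4 < s) : 7/20 + 9/5*h ≤ wgt h s := by
  unfold wgt
  split_ifs <;> first | linarith | exact le_min (by linarith) (by linarith)

lemma wgt_zone (h0 : 0 ≤ h) (h1 : h ≤ 1/36) (hs : 1/4 - h < s) : 7/20 - 9/5*h ≤ wgt h s := by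
  unfold wgt
  split_ifs <;> first | linarith | exact le_min (by linarith) (by linarith)

lemma wgt_third (h0 : 0 ≤ h) (h1 : h ≤ 1/36) (hs : 1/3 < s) : 1/2 ≤ wgt h s := by
  unfold wgt
  split_ifs <;> first | linarith | exact le_min (by linarith) (by linarith)

/-- For items above `1/4`, either the item is capped or its bonus is at least the classical one. -/
lemma wgt_class_large (h0 : 0 ≤ h) (h1 : h ≤ 1/36) (hs : 1/4 < s) (hs2 : s ≤ 1/2) :
    (1/3 < s ∧ wgt h s = 13/20 - 9/5*h) ∨ (1/3 < s ∧ wgt h s = 6/5*s + 1/10) ∨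
      (s ≤ 1/3 ∧ 9/5*s - 1/10 ≤ wgt h s) := by
  unfold wgt
  split_ifs with a1 a2 a3 a4 a5
  · linarith
  · linarith
  · linarith
  · right; right; constructor <;> linarith
  · right; right; constructor <;> linarith
  · rcases min_choice (6/5*s + 1/10) (13/20 - 9/5*h) with e | e <;> rw [e]
    · right; left; exact ⟨by linarith, rfl⟩
    · left; exact ⟨by linarith, rfl⟩

/-- An item larger than `m` has the bonus `3/5 * (m - 1/6)`, unless it lies in the zone `(1/4 - h, 1/4]`
or is capped. -/
lemma wgt_class (h0 : 0 ≤ h) (h1 : h ≤ 1/36) (hm : 1/6 ≤ m) (hm' : m ≤ 1/4 - h) (hms : m < s)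
    (hs2 : s ≤ 1/2) :
    6/5*s + 3/5*(m - 1/6) ≤ wgt h s ∨ (s ≤ 1/4 ∧ 7/20 - 9/5*h ≤ wgt h s) ∨
      13/20 - 9/5*h ≤ wgt h s := by
  rcases le_or_gt s (1/4) with hq | hq
  · rcases le_or_gt s (1/4 - h) with hz | hz
    · left
      unfold wgt
      split_ifs <;> linarith
    · right; left; exact ⟨hq, wgt_zone h0 h1 hz⟩
  · rcases wgt_class_large h0 h1 hq hs2 with ⟨_, e⟩ | ⟨_, e⟩ | ⟨_, e⟩
    · right; right; exact e.ge
    · left; rw [e]; linarith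
    · left; linarith

lemma wgt_half_le (h0 : 0 ≤ h) (h1 : h ≤ 1/36) (hs : 0 < s) (hs2 : s ≤ 1/2) :
    wgt h s ≤ 17/10*s := by
  unfold wgt
  split_ifs <;> first | linarith | exact (min_le_left _ _).trans (by linarith)

lemma wgt_half_le_cap (h0 : 0 ≤ h) (h1 : h ≤ 1/36) (hs2 : s ≤ 1/2) :
    wgt h s ≤ 13/20 - 9/5*h := by
  unfold wgt
  split_ifs <;> first | linarith | exact (min_le_right _ _)

lemma wgt_le_one (h0 : 0 ≤ h) (h1 : h ≤ 1/36) : wgt h s ≤ 1 := by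
  rcases le_or_gt s (1/2) with h2 | h2
  · linarith [wgt_half_le_cap h0 h1 h2]
  · rw [wgt_big h0 h1 h2]

lemma wgt_quarter_le_max (h0 : 0 ≤ h) (h1 : h ≤ 1/36) (hs2 : s ≤ 1/4) :
    wgt h s ≤ max (6/5*s) (9/5*s - 1/10) := by
  unfold wgt
  split_ifs
  · exact le_max_left _ _
  · exact le_max_right _ _
  · exact le_max_of_le_right (by linarith)

lemma wgt_quarter_le (h0 : 0 ≤ h) (h1 : h ≤ 1/36) (hs : 0 < s) (hs2 : s ≤ 1/4) :
    wgt h s ≤ 7/5*s :=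
  (wgt_quarter_le_max h0 h1 hs2).trans (max_le (by linarith) (by linarith))

lemma wgt_quarter_le_zone (h0 : 0 ≤ h) (h1 : h ≤ 1/36) (hs2 : s ≤ 1/4) :
    wgt h s ≤ 7/20 - 9/5*h := by
  unfold wgt
  split_ifs <;> linarith

/-- Upper bounds on the weight of an item between `1/4` and `1/2`, by range. -/
lemma wgt_upper_large (h0 : 0 ≤ h) (h1 : h ≤ 1/36) (hs : 1/4 < s) (hs2 : s ≤ 1/2) :
    (wgt h s ≤ 7/20 + 9/5*h) ∨ (s ≤ 1/3 ∧ wgt h s ≤ 9/5*s - 1/10) ∨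
      (1/3 < s ∧ wgt h s ≤ 6/5*s + 1/10) := by
  unfold wgt
  split_ifs with a1 a2 a3 a4 a5
  · linarith
  · linarith
  · linarith
  · left; exact le_rfl
  · right; left; exact ⟨a5, le_rfl⟩
  · right; right; exact ⟨by linarith, min_le_left _ _⟩

end weight

/-! ### Weights of bins of an arbitrary packing -/

section opt

variable {ι : Type*} {h t : ℝ}

/-- A set of items of size at most `1/4` weighs at most the value of the convex, superadditive
function `max (6/5 * q) (9/5 * q - 1/10)` at its total size `q`. -/
lemma sum_wgt_small (h0 : 0 ≤ h) (h1 : h ≤ 1/36) (sz : ι → ℝ) (N : Finset ι)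
    (hp : ∀ i ∈ N, 0 < sz i) (hq : ∀ i ∈ N, sz i ≤ 1/4) :
    ∑ i ∈ N, wgt h (sz i) ≤ max (6/5*∑ i ∈ N, sz i) (9/5*(∑ i ∈ N, sz i) - 1/10) := by
  induction N using Finset.induction_on with
  | empty => simp
  | insert a N ha ih =>
    rw [Finset.sum_insert ha, Finset.sum_insert ha]
    have ih' := ih (fun i hi => hp i (Finset.mem_insert_of_mem hi))
      (fun i hi => hq i (Finset.mem_insert_of_mem hi))
    have hw := wgt_quarter_le_max h0 h1 (hq a (Finset.mem_insert_self _ _))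
    have ha0 := hp a (Finset.mem_insert_self _ _)
    have hN0 : 0 ≤ ∑ i ∈ N, sz i :=
      Finset.sum_nonneg fun i hi => (hp i (Finset.mem_insert_of_mem hi)).le
    generalize ∑ i ∈ N, sz i = q at *
    rcases le_max_iff.1 hw with e | e <;> rcases le_max_iff.1 ih' with ez | ez
    · exact le_max_of_le_left (by linarith)
    · exact le_max_of_le_right (by linarith)
    · exact le_max_of_le_right (by linarith)
    · exact le_max_of_le_right (by linarith)

/-- A set of items of total size below `1/2`, that is, the companions of an item above `1/2`. -/
lemma sum_wgt_rest (h0 : 0 ≤ h) (h1 : h ≤ 1/36) (sz : ι → ℝ) (N : Finset ι)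
    (hp : ∀ i ∈ N, 0 < sz i) (hs : ∑ i ∈ N, sz i < 1/2) :
    ∑ i ∈ N, wgt h (sz i) ≤ 7/10 + 9/5*h := by
  by_cases hex : ∃ e ∈ N, 1/4 < sz e
  · obtain ⟨e, he, he4⟩ := hex
    have s1 := Finset.add_sum_erase N sz he
    have s2 := Finset.add_sum_erase N (fun i => wgt h (sz i)) he
    have hp' : ∀ i ∈ N.erase e, 0 < sz i := fun i hi => hp i (Finset.mem_of_mem_erase hi)
    have hN0 : 0 ≤ ∑ i ∈ N.erase e, sz i := Finset.sum_nonneg fun i hi => (hp' i hi).le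
    have hsm := sum_wgt_small h0 h1 sz (N.erase e) hp' (fun i hi => by
      have := Finset.single_le_sum (fun j hj => (hp' j hj).le) hi
      linarith)
    rw [← s2]
    have hu := wgt_upper_large h0 h1 he4 (by linarith)
    rcases le_max_iff.1 hsm with ez | ez <;>
      rcases hu with u | ⟨u1, u2⟩ | ⟨u1, u2⟩ <;> linarith
  · push Not at hex
    calc ∑ i ∈ N, wgt h (sz i) ≤ ∑ i ∈ N, 7/5*sz i :=
          Finset.sum_le_sum fun i hi => wgt_quarter_le h0 h1 (hp i hi) (hex i hi)
      _ = 7/5 * ∑ i ∈ N, sz i := by rw [Finset.mul_sum]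
      _ ≤ _ := by linarith

lemma two_wgt_rest_aux (h0 : 0 ≤ h) (h1 : h ≤ 1/36) {a b : ℝ} (ha : 0 < a) (hb : 0 < b)
    (hba : b ≤ a) (hs : a + b < 1/2) : wgt h a + wgt h b ≤ 7/10 := by
  have hb4 : b ≤ 1/4 := by linarith
  rcases le_or_gt a (1/4) with ha4 | ha4
  · linarith [wgt_quarter_le h0 h1 ha ha4, wgt_quarter_le h0 h1 hb hb4]
  · have z := wgt_quarter_le_zone h0 h1 hb4
    have hu := wgt_upper_large h0 h1 ha4 (by linarith)
    rcases le_max_iff.1 (wgt_quarter_le_max h0 h1 hb4) with ez | ez <;>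
      rcases hu with u | ⟨u1, u2⟩ | ⟨u1, u2⟩ <;> linarith

lemma two_wgt_rest (h0 : 0 ≤ h) (h1 : h ≤ 1/36) {a b : ℝ} (ha : 0 < a) (hb : 0 < b)
    (hs : a + b < 1/2) : wgt h a + wgt h b ≤ 7/10 := by
  rcases le_total b a with e | e
  · exact two_wgt_rest_aux h0 h1 ha hb e hs
  · linarith [two_wgt_rest_aux h0 h1 hb ha e (by linarith)]

/-- A set of `n` items that fits in a bin weighs at most `1.7 + (n - 3) * t`: the constraint that
`n` weighted items leave room for only `k - n` items of weight `t = 1/k`. -/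
lemma sum_wgt_bin (h0 : 0 ≤ h) (h1 : h ≤ 1/36) (ht : t ≤ 1/10) (hht : 9/5*h ≤ t)
    (hth : t ≤ 1/20 + 9/5*h) (sz : ι → ℝ) (N : Finset ι)
    (hp : ∀ i ∈ N, 0 < sz i) (hs : ∑ i ∈ N, sz i ≤ 1) :
    ∑ i ∈ N, wgt h (sz i) ≤ 17/10 + ((N.card : ℝ) - 3)*t := by
  have ht0 : 0 ≤ t := by linarith
  by_cases hex : ∃ e ∈ N, 1/2 < sz e
  · obtain ⟨e, he, he2⟩ := hex
    have s1 := Finset.add_sum_erase N sz he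
    have s2 := Finset.add_sum_erase N (fun i => wgt h (sz i)) he
    have hc := Finset.card_erase_add_one he
    have hp' : ∀ i ∈ N.erase e, 0 < sz i := fun i hi => hp i (Finset.mem_of_mem_erase hi)
    simp only [wgt_big h0 h1 he2] at s2
    rw [← s2, ← hc]
    generalize N.erase e = M at *
    have hM : ∑ i ∈ M, sz i < 1/2 := by linarith
    rcases Nat.lt_or_ge M.card 3 with h3 | h3
    · interval_cases hM3 : M.card
      · rw [Finset.card_eq_zero] at hM3
        subst hM3
        norm_num
        linarith
      · obtain ⟨a, rfl⟩ := Finset.card_eq_one.1 hM3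
        simp only [Finset.sum_singleton] at *
        have := wgt_half_le_cap h0 h1 hM.le
        norm_num
        linarith
      · obtain ⟨a, b, hab, rfl⟩ := Finset.card_eq_two.1 hM3
        rw [Finset.sum_pair hab] at *
        have := two_wgt_rest h0 h1 (hp' a (by simp)) (hp' b (by simp)) hM
        norm_num
        linarith
    · have := sum_wgt_rest h0 h1 sz M hp' hM
      have h3' : (3 : ℝ) ≤ M.card := by exact_mod_cast h3
      push_cast
      nlinarith
  · push Not at hex
    rcases Nat.lt_or_ge N.card 3 with h3 | h3
    · have hle : ∑ i ∈ N, wgt h (sz i) ≤ N.card • (13/20) :=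
        Finset.sum_le_card_nsmul _ _ _ fun i hi =>
          (wgt_half_le_cap h0 h1 (hex i hi)).trans (by linarith)
      refine hle.trans ?_
      interval_cases N.card <;> norm_num <;> linarith
    · have h3' : (3 : ℝ) ≤ N.card := by exact_mod_cast h3
      calc ∑ i ∈ N, wgt h (sz i) ≤ ∑ i ∈ N, 17/10*sz i :=
            Finset.sum_le_sum fun i hi => wgt_half_le h0 h1 (hp i hi) (hex i hi)
        _ = 17/10 * ∑ i ∈ N, sz i := by rw [Finset.mul_sum]
        _ ≤ _ := by nlinarith

end opt

/-! ### Weights of First Fit bins -/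

section ffside

variable {h m r : ℝ}

/-- The potential of a lower bound `m` on the sizes of all further items. Each jump pays for the
single bin that lifts the bound across that threshold. -/
def pot (m : ℝ) : ℝ :=
  6/5*(max m (1/6) - 1/6) + (if 1/4 ≤ m then 1/5 else 0) + (if 1/3 < m then 1 else 0) +
    (if 1/2 ≤ m then 1 else 0)

lemma pot_mono : Monotone pot := by
  intro a b hab
  unfold pot
  have h1 : max a (1/6 : ℝ) ≤ max b (1/6) := max_le_max_right _ hab
  gcongr ?_ + ?_ + ?_ + ?_
  · linarith
  all_goals split_ifs <;> linarith

lemma pot_le (hm : m ≤ 1) : pot m ≤ 16/5 := by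
  refine (pot_mono hm).trans ?_
  unfold pot
  norm_num

lemma pot_nonneg : 0 ≤ pot m := by
  unfold pot
  have := le_max_right m (1/6)
  have := sub_nonneg.2 this
  positivity

/-- The linear part of the potential. -/
lemma pot_lin (hmr : m ≤ r) : 6/5*(max r (1/6) - max m (1/6)) ≤ pot r - pot m := by
  unfold pot
  split_ifs <;> linarith

lemma pot_jump_quarter (hm : m < 1/4) (hr : 1/4 ≤ r) : 1/5 ≤ pot r - pot m := by
  have := max_le_max_right (1/6 : ℝ) (show m ≤ r by linarith)
  unfold pot
  split_ifs <;> linarith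

lemma pot_jump_third (hm : m ≤ 1/3) (hr : 1/3 < r) : 1 ≤ pot r - pot m := by
  have := max_le_max_right (1/6 : ℝ) (show m ≤ r by linarith)
  unfold pot
  split_ifs <;> linarith

lemma pot_jump_half (hm : m < 1/2) (hr : 1/2 ≤ r) : 1 ≤ pot r - pot m := by
  have := max_le_max_right (1/6 : ℝ) (show m ≤ r by linarith)
  unfold pot
  split_ifs <;> linarith

lemma list_wgt_nonneg (h0 : 0 ≤ h) (h1 : h ≤ 1/36) (B : List ℝ) (hp : ∀ x ∈ B, 0 < x) :
    0 ≤ (B.map (wgt h)).sum :=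
  List.sum_nonneg fun y hy => by
    obtain ⟨x, hx, rfl⟩ := List.mem_map.1 hy
    exact wgt_nonneg h0 h1 (hp x hx)

lemma list_wgt_ge (h0 : 0 ≤ h) (h1 : h ≤ 1/36) (B : List ℝ) (hp : ∀ x ∈ B, x ≤ 1/2) :
    6/5*B.sum ≤ (B.map (wgt h)).sum := by
  induction B with
  | nil => simp
  | cons a B ih =>
    have := wgt_ge h0 h1 (hp a (by simp))
    have := ih fun x hx => hp x (by simp [hx])
    simp only [List.map_cons, List.sum_cons]
    linarith

lemma two_items_aux (h0 : 0 ≤ h) (h1 : h ≤ 1/36) {a b : ℝ} (hm : m ≤ 1/3) (hma : m < a)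
    (ha : 1/4 < a) (hab : a ≤ b) (hb : b ≤ 1/2) (hs : 2/3 ≤ a + b) :
    1 ≤ wgt h a + wgt h b ∨ 6/5*(a + b) + 6/5*(m - 1/6) ≤ wgt h a + wgt h b := by
  have qa := wgt_quarter h0 h1 ha
  rcases wgt_class_large h0 h1 (ha.trans_le hab) hb with ⟨b1, eb⟩ | ⟨b1, eb⟩ | ⟨b1, eb⟩
  · left; linarith
  · rcases wgt_class_large h0 h1 ha (hab.trans hb) with ⟨a1, ea⟩ | ⟨a1, ea⟩ | ⟨a1, ea⟩
    · left; linarith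
    · right; linarith
    · right; linarith
  · right
    rcases wgt_class_large h0 h1 ha (hab.trans hb) with ⟨a1, ea⟩ | ⟨a1, ea⟩ | ⟨a1, ea⟩ <;> linarith

lemma two_items (h0 : 0 ≤ h) (h1 : h ≤ 1/36) {a b : ℝ} (hm : m ≤ 1/3) (hma : m < a)
    (hmb : m < b) (ha2 : a ≤ 1/2) (hb : b ≤ 1/2) (hs : 2/3 ≤ a + b)
    (hs' : m < 1/4 → 3/4 < a + b) :
    1 ≤ wgt h a + wgt h b ∨ 6/5*(a + b) + 6/5*(m - 1/6) ≤ wgt h a + wgt h b := by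
  have ha4 : 1/4 < a := by
    rcases lt_or_ge m (1/4) with e | e
    · linarith [hs' e]
    · linarith
  have hb4 : 1/4 < b := by
    rcases lt_or_ge m (1/4) with e | e
    · linarith [hs' e]
    · linarith
  rcases le_total a b with e | e
  · exact two_items_aux h0 h1 hm hma ha4 e hb hs
  · rw [add_comm a b, add_comm (wgt h a)] at *
    exact two_items_aux h0 h1 hm hmb hb4 e ha2 hs

lemma three_items (h0 : 0 ≤ h) (h1 : h ≤ 1/36) {a b c : ℝ} (hm : 1/6 ≤ m) (hma : m < a)
    (hmb : m < b) (hmc : m < c) (ha : a ≤ 1/2) (hb : b ≤ 1/2) (hc : c ≤ 1/2)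
    (hs' : m < 1/4 → 3/4 < a + b + c) :
    1 ≤ wgt h a + wgt h b + wgt h c ∨
      6/5*(a + b + c) + 6/5*(m - 1/6) ≤ wgt h a + wgt h b + wgt h c := by
  rcases lt_or_ge m (1/4) with hq | hq
  · have hs := hs' hq
    rcases le_or_gt m (1/4 - h) with hz | hz
    · have fa := wgt_fifth h0 h1 (hm.trans_lt hma)
      have fb := wgt_fifth h0 h1 (hm.trans_lt hmb)
      have fc := wgt_fifth h0 h1 (hm.trans_lt hmc)
      -- a capped item weighs at least `3/5`, the two others at least `1/5` each
      rcases or_assoc.2 (wgt_class h0 h1 hm hz hma ha) with A | A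
      swap
      · left; linarith only [A, fb, fc, h1]
      rcases or_assoc.2 (wgt_class h0 h1 hm hz hmb hb) with B | B
      swap
      · left; linarith only [B, fa, fc, h1]
      rcases or_assoc.2 (wgt_class h0 h1 hm hz hmc hc) with C | C
      swap
      · left; linarith only [C, fa, fb, h1]
      -- with two items in the zone, the third exceeds `1/4`; otherwise two items carry the bonus
      rcases A with a1 | ⟨a1, a2⟩ <;> rcases B with b1 | ⟨b1, b2⟩
      · right; linarith only [a1, b1, wgt_ge h0 h1 hc]
      · rcases C with c1 | ⟨c1, c2⟩
        · right; linarith only [a1, c1, wgt_ge h0 h1 hb]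
        · left; linarith only [b2, c2, h1, wgt_quarter h0 h1 (show 1/4 < a by linarith)]
      · rcases C with c1 | ⟨c1, c2⟩
        · right; linarith only [b1, c1, wgt_ge h0 h1 ha]
        · left; linarith only [a2, c2, h1, wgt_quarter h0 h1 (show 1/4 < b by linarith)]
      · left; linarith only [a2, b2, h1, wgt_quarter h0 h1 (show 1/4 < c by linarith)]
    · left
      have za := wgt_zone h0 h1 (hz.trans hma)
      have zb := wgt_zone h0 h1 (hz.trans hmb)
      have zc := wgt_zone h0 h1 (hz.trans hmc)
      -- the total exceeds `3/4`, so one of the three items exceeds `1/4`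
      rcases le_or_gt a (1/4) with a4 | a4
      · rcases le_or_gt b (1/4) with b4 | b4
        · linarith [wgt_quarter h0 h1 (show 1/4 < c by linarith)]
        · linarith [wgt_quarter h0 h1 b4]
      · linarith [wgt_quarter h0 h1 a4]
  · left
    linarith [wgt_quarter h0 h1 (hq.trans_lt hma), wgt_quarter h0 h1 (hq.trans_lt hmb),
      wgt_quarter h0 h1 (hq.trans_lt hmc)]

lemma four_items (h0 : 0 ≤ h) (h1 : h ≤ 1/36) {a b c d : ℝ} (hm : 1/6 ≤ m) (hma : m < a)
    (hmb : m < b) (hmc : m < c) (hmd : m < d) (ha : a ≤ 1/2) (hb : b ≤ 1/2) (hc : c ≤ 1/2)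
    (hd : d ≤ 1/2) :
    1 ≤ wgt h a + wgt h b + wgt h c + wgt h d ∨
      6/5*(a + b + c + d) + 6/5*(m - 1/6) ≤ wgt h a + wgt h b + wgt h c + wgt h d := by
  rcases le_or_gt m (1/4 - h) with hz | hz
  · have fa := wgt_fifth h0 h1 (hm.trans_lt hma)
    have fb := wgt_fifth h0 h1 (hm.trans_lt hmb)
    have fc := wgt_fifth h0 h1 (hm.trans_lt hmc)
    have fd := wgt_fifth h0 h1 (hm.trans_lt hmd)
    have ga := wgt_ge h0 h1 ha
    have gb := wgt_ge h0 h1 hb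
    have gc := wgt_ge h0 h1 hc
    have gd := wgt_ge h0 h1 hd
    rcases or_assoc.2 (wgt_class h0 h1 hm hz hma ha) with A | A
    swap
    · left; linarith only [A, fb, fc, fd, h1]
    rcases or_assoc.2 (wgt_class h0 h1 hm hz hmb hb) with B | B
    swap
    · left; linarith only [B, fa, fc, fd, h1]
    rcases or_assoc.2 (wgt_class h0 h1 hm hz hmc hc) with C | C
    swap
    · left; linarith only [C, fa, fb, fd, h1]
    -- two items in the zone suffice, and so do two items with the bonus
    rcases A with a1 | ⟨a1, a2⟩ <;> rcases B with b1 | ⟨b1, b2⟩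
    · right; linarith only [a1, b1, gc, gd]
    · rcases C with c1 | ⟨c1, c2⟩
      · right; linarith only [a1, c1, gb, gd]
      · left; linarith only [b2, c2, h1, fa, fd]
    · rcases C with c1 | ⟨c1, c2⟩
      · right; linarith only [b1, c1, ga, gd]
      · left; linarith only [a2, c2, h1, fb, fd]
    · left; linarith only [a2, b2, h1, fc, fd]
  · left
    linarith [wgt_zone h0 h1 (hz.trans hma), wgt_zone h0 h1 (hz.trans hmb),
      wgt_zone h0 h1 (hz.trans hmc), wgt_zone h0 h1 (hz.trans hmd)]

/-- A well-filled bin either is heavy or carries, besides `6/5` of its total size, twice the bonus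
of an item of size `m`. -/
lemma bin_heavy_or_bonus (h0 : 0 ≤ h) (h1 : h ≤ 1/36) (B : List ℝ) (hp : ∀ x ∈ B, 0 < x)
    (hmB : ∀ x ∈ B, m < x) (hhalf : ∀ x ∈ B, x ≤ 1/2) (hs : 2/3 ≤ B.sum) (hm6 : 1/6 ≤ m)
    (hs' : m < 1/4 → 3/4 < B.sum) :
    1 ≤ (B.map (wgt h)).sum ∨ 6/5*B.sum + 6/5*(m - 1/6) ≤ (B.map (wgt h)).sum := by
  rcases B with _ | ⟨a, _ | ⟨b, B⟩⟩
  · norm_num at hs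
  · have h2 := hhalf a (by simp)
    rw [List.sum_singleton] at hs
    linarith
  have ma := hmB a (by simp)
  have mb := hmB b (by simp)
  have a2 := hhalf a (by simp)
  have b2 := hhalf b (by simp)
  rcases B with _ | ⟨c, B⟩
  · simp only [List.map_cons, List.sum_cons, List.map_nil, List.sum_nil, add_zero] at hs hs' ⊢
    rcases le_or_gt m (1/3) with hm3 | hm3
    · exact two_items h0 h1 hm3 ma mb a2 b2 hs hs'
    · left
      linarith [wgt_third h0 h1 (hm3.trans ma), wgt_third h0 h1 (hm3.trans mb)]
  have mc := hmB c (by simp)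
  have c2 := hhalf c (by simp)
  rcases B with _ | ⟨d, B⟩
  · simp only [List.map_cons, List.sum_cons, List.map_nil, List.sum_nil, add_zero,
      ← add_assoc] at hs' ⊢
    exact three_items h0 h1 hm6 ma mb mc a2 b2 c2 hs'
  have md := hmB d (by simp)
  have d2 := hhalf d (by simp)
  rcases B with _ | ⟨e, B⟩
  · simp only [List.map_cons, List.sum_cons, List.map_nil, List.sum_nil, add_zero, ← add_assoc]
    exact four_items h0 h1 hm6 ma mb mc md a2 b2 c2 d2
  left
  have me := hmB e (by simp)
  have hB := list_wgt_nonneg h0 h1 B fun x hx => hp x (by simp [hx])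
  simp only [List.map_cons, List.sum_cons]
  linarith only [hB, wgt_fifth h0 h1 (hm6.trans_lt ma), wgt_fifth h0 h1 (hm6.trans_lt mb),
    wgt_fifth h0 h1 (hm6.trans_lt mc), wgt_fifth h0 h1 (hm6.trans_lt md),
    wgt_fifth h0 h1 (hm6.trans_lt me)]

/-- A bin with free space above `1/3` lifts the lower bound on item sizes across `1/3` or `1/2`. -/
lemma bin_light (B : List ℝ) (hB : B ≠ []) (hp : ∀ x ∈ B, 0 < x) (hmB : ∀ x ∈ B, m < x)
    (hhalf : ∀ x ∈ B, x ≤ 1/2) (hr : 1 - B.sum ≤ r) (hs : B.sum < 2/3) :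
    1 ≤ pot r - pot m := by
  rcases B with _ | ⟨a, _ | ⟨b, B⟩⟩
  · exact absurd rfl hB
  · have h2 := hhalf a (by simp)
    have h3 := hmB a (by simp)
    rw [List.sum_singleton] at hr
    exact pot_jump_half (by linarith) (by linarith)
  · have ha := hmB a (by simp)
    have hb := hmB b (by simp)
    have hB' : 0 ≤ B.sum := List.sum_nonneg fun x hx => (hp x (by simp [hx])).le
    simp only [List.sum_cons] at hs hr
    exact pot_jump_third (by linarith) (by linarith)

/-- The amortized weight of a bin: if all its items exceed `m`, and `r` bounds both `m` and the
free space of the bin, then its weight plus the increase in potential is at least `1`. -/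
lemma bin_amortized (h0 : 0 ≤ h) (h1 : h ≤ 1/36) (B : List ℝ) (hB : B ≠ [])
    (hp : ∀ x ∈ B, 0 < x) (hmB : ∀ x ∈ B, m < x) (hmr : m ≤ r) (hr : 1 - B.sum ≤ r) :
    1 ≤ (B.map (wgt h)).sum + (pot r - pot m) := by
  have hmono := pot_mono hmr
  by_cases hbig : ∃ x ∈ B, 1/2 < x
  · obtain ⟨x, hx, hx2⟩ := hbig
    have : wgt h x ≤ (B.map (wgt h)).sum :=
      List.single_le_sum (fun y hy => by
        obtain ⟨z, hz, rfl⟩ := List.mem_map.1 hy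
        exact wgt_nonneg h0 h1 (hp z hz)) _ (List.mem_map_of_mem hx)
    rw [wgt_big h0 h1 hx2] at this
    linarith
  push Not at hbig
  have hge := list_wgt_ge h0 h1 B hbig
  have hnn := list_wgt_nonneg h0 h1 B hp
  rcases lt_or_ge B.sum (2/3) with hs | hs
  · linarith [bin_light B hB hp hmB hbig hr hs]
  have hlin := pot_lin hmr
  have hrle := le_max_left r (1/6)
  rcases lt_or_ge m (1/6) with hm6 | hm6
  · rw [max_eq_right hm6.le] at hlin
    linarith
  rw [max_eq_left hm6] at hlin
  by_cases hjump : m < 1/4 ∧ B.sum ≤ 3/4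
  · linarith [pot_jump_quarter (m := m) (r := r) hjump.1 (by linarith)]
  have hs' : m < 1/4 → 3/4 < B.sum := fun e => by
    by_contra hc
    exact hjump ⟨e, not_lt.1 hc⟩
  rcases bin_heavy_or_bonus h0 h1 B hp hmB hbig hs hm6 hs' with e | e <;> linarith

/-- If no item of a bin would have fitted in an earlier bin, the number of bins exceeds the total
weight by at most `16/5 - pot m`, where `m` is a lower bound on all item sizes. -/
lemma length_le_wgt (h0 : 0 ≤ h) (h1 : h ≤ 1/36) (bins : List (List ℝ)) :
    ∀ m : ℝ, m ≤ 1 → (∀ B ∈ bins, B ≠ []) → (∀ B ∈ bins, ∀ x ∈ B, 0 < x) →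
      (∀ B ∈ bins, ∀ x ∈ B, m < x) →
      bins.Pairwise (fun A B => ∀ x ∈ B, 1 < A.sum + x) →
      (bins.length : ℝ) ≤ (bins.map fun B => (B.map (wgt h)).sum).sum + (16/5 - pot m) := by
  induction bins with
  | nil =>
    intro m hm _ _ _ _
    simpa using pot_le hm
  | cons B bins ih =>
    intro m hm hne hp hmB hpw
    rw [List.pairwise_cons] at hpw
    have hB := bin_amortized h0 h1 B (hne B (by simp)) (hp B (by simp)) (hmB B (by simp))
      (le_max_left m (1 - B.sum)) (le_max_right m (1 - B.sum))
    have hB0 : 0 ≤ B.sum := List.sum_nonneg fun x hx => (hp B (by simp) x hx).le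
    have := ih (max m (1 - B.sum)) (max_le hm (by linarith))
      (fun C hC => hne C (by simp [hC])) (fun C hC => hp C (by simp [hC]))
      (fun C hC x hx => max_lt (hmB C (by simp [hC]) x hx) (by linarith [hpw.1 C hC x hx]))
      hpw.2
    simp only [List.length_cons, List.map_cons, List.sum_cons]
    push_cast
    linarith

end ffside

/-! ### First Fit with the contents of the bins -/

section rich

variable {ι : Type*} (k : ℕ) (sz : ι → ℝ)

/-- `ffUpdate` on bins that record their items instead of only their number and total size. -/
def richUpdate (x : ι) : List (List ι) → List (List ι)
  | [] => [[x]]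
  | b :: bs =>
      if b.length < k ∧ (b.map sz).sum + sz x ≤ 1 then (x :: b) :: bs
      else b :: richUpdate x bs

/-- What `ffState` remembers of a bin. -/
def summary (b : List ι) : ℕ × ℝ := (b.length, (b.map sz).sum)

lemma ffUpdate_map_summary (x : ι) (bs : List (List ι)) :
    ffUpdate k (sz x) (bs.map (summary sz)) = (richUpdate k sz x bs).map (summary sz) := by
  induction bs with
  | nil => simp [ffUpdate, richUpdate, summary]
  | cons b bs ih =>
    simp only [List.map_cons, ffUpdate, richUpdate, ih]
    by_cases hc : b.length < k ∧ (b.map sz).sum + sz x ≤ 1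
    · have hc' : (summary sz b).1 < k ∧ (summary sz b).2 + sz x ≤ 1 := hc
      rw [if_pos hc, if_pos hc']
      simp [summary, add_comm]
    · have hc' : ¬ ((summary sz b).1 < k ∧ (summary sz b).2 + sz x ≤ 1) := hc
      rw [if_neg hc, if_neg hc', List.map_cons]

/-- The packing of the items `xs` by First Fit, started on the bins `bs`. -/
def richState (xs : List ι) (bs : List (List ι)) : List (List ι) :=
  xs.foldl (fun bs x => richUpdate k sz x bs) bs

lemma foldl_map_summary (xs : List ι) (bs : List (List ι)) :
    (xs.map sz).foldl (fun bs x => ffUpdate k x bs) (bs.map (summary sz)) =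
      (richState k sz xs bs).map (summary sz) := by
  induction xs generalizing bs with
  | nil => rfl
  | cons x xs ih =>
    simp only [List.map_cons, List.foldl_cons, richState, ffUpdate_map_summary] at *
    exact ih _

lemma richUpdate_flatten (x : ι) (bs : List (List ι)) :
    (richUpdate k sz x bs).flatten.Perm (x :: bs.flatten) := by
  induction bs with
  | nil => simp [richUpdate]
  | cons b bs ih =>
    simp only [richUpdate]
    split_ifs
    · simp
    · simp only [List.flatten_cons]
      exact (ih.append_left b).trans List.perm_middle

lemma richState_flatten (xs : List ι) (bs : List (List ι)) :
    (richState k sz xs bs).flatten.Perm (xs ++ bs.flatten) := by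
  induction xs generalizing bs with
  | nil => exact List.Perm.refl _
  | cons x xs ih =>
    refine (ih (richUpdate k sz x bs)).trans ?_
    refine ((richUpdate_flatten k sz x bs).append_left xs).trans ?_
    exact List.perm_middle

/-- No item of a bin would have fitted in an earlier bin, and no bin is empty. -/
def Inv (bs : List (List ι)) : Prop :=
  (∀ B ∈ bs, B ≠ []) ∧
    bs.Pairwise (fun A B => ∀ x ∈ B, k ≤ A.length ∨ 1 < (A.map sz).sum + sz x)

lemma mem_richUpdate (x : ι) (bs : List (List ι)) (B : List ι) (hB : B ∈ richUpdate k sz x bs)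
    (y : ι) (hy : y ∈ B) : y = x ∨ ∃ C ∈ bs, y ∈ C := by
  have : y ∈ (richUpdate k sz x bs).flatten := List.mem_flatten.2 ⟨B, hB, hy⟩
  rw [(richUpdate_flatten k sz x bs).mem_iff, List.mem_cons, List.mem_flatten] at this
  exact this

lemma inv_richUpdate (x : ι) (hx : 0 < sz x) (bs : List (List ι)) (hbs : Inv k sz bs) :
    Inv k sz (richUpdate k sz x bs) := by
  induction bs with
  | nil => simp [Inv, richUpdate]
  | cons b bs ih =>
    obtain ⟨hne, hpw⟩ := hbs
    rw [List.pairwise_cons] at hpw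
    obtain ⟨ih1, ih2⟩ := ih ⟨fun B hB => hne B (by simp [hB]), hpw.2⟩
    simp only [richUpdate]
    split_ifs with hc
    · refine ⟨?_, List.pairwise_cons.2 ⟨?_, hpw.2⟩⟩
      · intro B hB
        rcases List.mem_cons.1 hB with rfl | hB
        · simp
        · exact hne B (by simp [hB])
      · intro B hB y hy
        rcases hpw.1 B hB y hy with e | e
        · left; simp only [List.length_cons]; omega
        · right; simp only [List.map_cons, List.sum_cons]; linarith
    · refine ⟨?_, List.pairwise_cons.2 ⟨?_, ih2⟩⟩
      · intro B hB
        rcases List.mem_cons.1 hB with rfl | hB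
        · exact hne B (by simp)
        · exact ih1 B hB
      · intro B hB y hy
        rcases mem_richUpdate k sz x bs B hB y hy with rfl | ⟨C, hC, hyC⟩
        · by_contra hcon
          push Not at hcon
          exact hc hcon
        · exact hpw.1 C hC y hyC

lemma inv_richState (hsz : ∀ i, 0 < sz i) (xs : List ι) (bs : List (List ι))
    (hbs : Inv k sz bs) : Inv k sz (richState k sz xs bs) := by
  induction xs generalizing bs with
  | nil => exact hbs
  | cons x xs ih => exact ih _ (inv_richUpdate k sz x (hsz x) bs hbs)

/-- The weight of an item given the First Fit bins: `1/k` in a bin that reached the cardinality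
bound, and `wgt` of its size otherwise. -/
def itemWgt (h : ℝ) (bs : List (List ι)) (i : ι) : ℝ :=
  if ∃ B ∈ bs, i ∈ B ∧ k ≤ B.length then 1 / (k : ℝ) else wgt h (sz i)

lemma sum_flatten_map (w : ι → ℝ) (bs : List (List ι)) :
    (bs.flatten.map w).sum = (bs.map fun B => (B.map w).sum).sum := by
  induction bs with
  | nil => simp
  | cons b bs ih =>
    rw [List.flatten_cons, List.map_append, List.sum_append, ih, List.map_cons, List.sum_cons]

/-- Splitting the bins by a predicate: those outside it weigh at least `1` each. -/
lemma length_split (p : List ι → Prop) [DecidablePred p] (w : List ι → ℝ) (bs : List (List ι))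
    (hw : ∀ B ∈ bs, ¬ p B → 1 ≤ w B) :
    (bs.length : ℝ) + ((bs.filter p).map w).sum ≤ (bs.map w).sum + (bs.filter p).length := by
  induction bs with
  | nil => simp
  | cons b bs ih =>
    have ih' := ih fun B hB => hw B (by simp [hB])
    by_cases hb : p b
    · simp only [List.filter_cons, hb, decide_true, if_true, List.map_cons, List.sum_cons,
        List.length_cons]
      push_cast
      linarith
    · have := hw b (by simp) hb
      simp only [List.filter_cons, hb, decide_false, Bool.false_eq_true, if_false, List.map_cons,
        List.sum_cons, List.length_cons]
      push_cast
      linarith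

/-- The full bins weigh at least `1` each, and the others are, on their own, a First Fit packing
without cardinality constraint. -/
lemma length_le_itemWgt {h : ℝ} (h0 : 0 ≤ h) (h1 : h ≤ 1/36) (hk : 0 < k) (hsz : ∀ i, 0 < sz i)
    (bs : List (List ι)) (hbs : Inv k sz bs) (hnd : bs.flatten.Nodup) :
    (bs.length : ℝ) ≤ (bs.flatten.map (itemWgt k sz h bs)).sum + 16/5 := by
  have hk' : (0 : ℝ) < k := by exact_mod_cast hk
  rw [sum_flatten_map]
  obtain ⟨hne, hpw⟩ := hbs
  have hfull : ∀ B ∈ bs, ¬ B.length < k → 1 ≤ (B.map (itemWgt k sz h bs)).sum := by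
    intro B hB hlen
    have hlen' : k ≤ B.length := not_lt.1 hlen
    have : B.map (itemWgt k sz h bs) = B.map (fun _ => 1 / (k : ℝ)) :=
      List.map_congr_left fun i hi => if_pos ⟨B, hB, hi, hlen'⟩
    rw [this, List.map_const', List.sum_replicate, nsmul_eq_mul, mul_one_div, le_div_iff₀ hk',
      one_mul]
    exact_mod_cast hlen'
  have hsplit := length_split (fun B => B.length < k)
    (fun B => (B.map (itemWgt k sz h bs)).sum) bs hfull
  -- by disjointness, the items of a non-full bin lie in no full bin
  have hdisj : ∀ B ∈ bs, B.length < k → B.map (itemWgt k sz h bs) = (B.map sz).map (wgt h) := by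
    intro B hB hlen
    rw [List.map_map]
    refine List.map_congr_left fun i hi => if_neg ?_
    rintro ⟨C, hC, hiC, hlenC⟩
    have hne' : B ≠ C := by
      rintro rfl
      omega
    have hpd := (List.nodup_flatten.1 hnd).2
    have hsym : Std.Symm (List.Disjoint : List ι → List ι → Prop) :=
      ⟨fun _ _ => List.Disjoint.symm⟩
    exact hpd.forall hB hC hne' hi hiC
  have hrest := length_le_wgt h0 h1
    ((bs.filter fun B => B.length < k).map fun B => B.map sz) 0 zero_le_one
    (by
      intro B hB
      obtain ⟨C, hC, rfl⟩ := List.mem_map.1 hB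
      simpa using hne C (List.mem_of_mem_filter hC))
    (by
      intro B hB x hx
      obtain ⟨C, hC, rfl⟩ := List.mem_map.1 hB
      obtain ⟨i, hi, rfl⟩ := List.mem_map.1 hx
      exact hsz i)
    (by
      intro B hB x hx
      obtain ⟨C, hC, rfl⟩ := List.mem_map.1 hB
      obtain ⟨i, hi, rfl⟩ := List.mem_map.1 hx
      exact hsz i)
    (by
      rw [List.pairwise_map]
      refine (hpw.filter _).imp_of_mem ?_
      intro A B hA hB hAB x hx
      obtain ⟨i, hi, rfl⟩ := List.mem_map.1 hx
      have hA' : A.length < k := by simpa using List.of_mem_filter hA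
      exact (hAB i hi).resolve_left (by omega))
  have hpot : 0 ≤ pot 0 := pot_nonneg
  have heq : ((bs.filter fun B => B.length < k).map fun B => B.map sz).map
      (fun B => (B.map (wgt h)).sum) =
      (bs.filter fun B => B.length < k).map fun B => (B.map (itemWgt k sz h bs)).sum := by
    rw [List.map_map]
    refine List.map_congr_left fun B hB => ?_
    rw [hdisj B (List.mem_of_mem_filter hB) (by simpa using List.of_mem_filter hB)]
    rfl
  rw [heq, List.length_map] at hrest
  linarith

/-- A feasible bin weighs at most `2.7 - 3/k`. -/
lemma sum_itemWgt_bin {h : ℝ} (h0 : 0 ≤ h) (h1 : h ≤ 1/36) (hk : 10 ≤ k)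
    (hht : 9/5*h ≤ 1 / (k : ℝ)) (hth : 1 / (k : ℝ) ≤ 1/20 + 9/5*h) (hsz : ∀ i, 0 < sz i)
    (bs : List (List ι)) (T : Finset ι) (hcard : T.card ≤ k) (hsum : ∑ i ∈ T, sz i ≤ 1) :
    ∑ i ∈ T, itemWgt k sz h bs i ≤ 2.7 - 3 / k := by
  have hk10 : (10 : ℝ) ≤ k := by exact_mod_cast hk
  have hk' : (0 : ℝ) < k := by linarith
  have ht : 1 / (k : ℝ) ≤ 1/10 := one_div_le_one_div_of_le (by norm_num) hk10
  unfold itemWgt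
  rw [Finset.sum_ite, Finset.sum_const, nsmul_eq_mul]
  have hc := Finset.card_filter_add_card_filter_not (s := T)
    (fun i => ∃ B ∈ bs, i ∈ B ∧ k ≤ B.length)
  set F := T.filter (fun i => ∃ B ∈ bs, i ∈ B ∧ k ≤ B.length)
  set N := T.filter (fun i => ¬ ∃ B ∈ bs, i ∈ B ∧ k ≤ B.length) with hN
  have hNs : ∑ i ∈ N, sz i ≤ 1 :=
    (Finset.sum_le_sum_of_subset_of_nonneg (Finset.filter_subset _ _)
      fun i _ _ => (hsz i).le).trans hsum
  have hW := sum_wgt_bin h0 h1 ht hht hth sz N (fun i _ => hsz i) hNs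
  have hcr : (F.card : ℝ) + N.card ≤ k := by exact_mod_cast hc.le.trans hcard
  have hmul : ((F.card : ℝ) + N.card) * (1 / k) ≤ 1 := by
    rw [mul_one_div, div_le_one hk']
    exact hcr
  have h3 : (3 : ℝ) / k = 3 * (1 / k) := by ring
  rw [h3]
  norm_num only
  nlinarith

end rich

lemma exists_opt (k : ℕ) (hk : 1 ≤ k) (L : List ℝ) (hL : ValidInput L) :
    ∃ f : Fin L.length → ℕ, IsFeasible k L f ∧ binsUsed L f = OPT k L := by
  have hne : {n | ∃ f : Fin L.length → ℕ, IsFeasible k L f ∧ binsUsed L f = n}.Nonempty := by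
    refine ⟨_, fun i => i.1, ?_, rfl⟩
    intro b
    -- one bin per item
    have hc : (Finset.univ.filter (fun i : Fin L.length => i.1 = b)).card ≤ 1 :=
      Finset.card_le_one.2 fun i hi j hj => by
        simp only [Finset.mem_filter, Finset.mem_univ, true_and] at hi hj
        exact Fin.ext (hi.trans hj.symm)
    refine ⟨hc.trans hk, ?_⟩
    calc _ ≤ (Finset.univ.filter (fun i : Fin L.length => i.1 = b)).card • (1 : ℝ) :=
          Finset.sum_le_card_nsmul _ _ _ fun i _ => (hL _ (L.get_mem i)).2
      _ ≤ 1 := by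
          rw [nsmul_eq_mul, mul_one]
          exact_mod_cast hc
  exact Nat.sInf_mem hne

/-- A value of `h` for which both constraints on `t = 1/k` hold: `h = 0` suffices for `k ≥ 20`. -/
lemma exists_param (t : ℝ) (ht0 : 0 ≤ t) (ht : t ≤ 1/10) :
    ∃ h : ℝ, 0 ≤ h ∧ h ≤ 1/36 ∧ 9/5*h ≤ t ∧ t ≤ 1/20 + 9/5*h := by
  rcases le_or_gt t (1/20) with e | e
  · exact ⟨0, le_rfl, by norm_num, by linarith, by linarith⟩
  · exact ⟨1/36, by norm_num, le_rfl, by linarith, by linarith⟩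

end FFProof

/-- For every k ≥ 10 and every input `L`,
FF(L) ≤ (2.7 − 3/k)·OPT(L) + 5: the asymptotic competitive ratio of First Fit for
k ≥ 10 is at most 2.7 − 3/k. -/
theorem ff_k10_ub (k : ℕ) (hk : 10 ≤ k) (L : List ℝ) (hL : ValidInput L) :
    (FF k L : ℝ) ≤ ((2.7 : ℝ) - 3 / k) * (OPT k L : ℝ) + 5 := by
  have hk10 : (10 : ℝ) ≤ k := by exact_mod_cast hk
  have ht : 1 / (k : ℝ) ≤ 1/10 := one_div_le_one_div_of_le (by norm_num) hk10
  obtain ⟨h, h0, h1, hht, hth⟩ := FFProof.exists_param (1 / (k : ℝ)) (by positivity) ht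
  obtain ⟨f, hf, hfO⟩ := FFProof.exists_opt k (by omega) L hL
  have hsz : ∀ i, 0 < L.get i := fun i => (hL _ (L.get_mem i)).1
  set bs := FFProof.richState k L.get (List.finRange L.length) [] with hbs
  have hstate : ffState k L = bs.map (FFProof.summary L.get) := by
    have := FFProof.foldl_map_summary k L.get (List.finRange L.length) []
    rw [List.map_get_finRange, List.map_nil] at this
    exact this
  have hperm : bs.flatten.Perm (List.finRange L.length) := by
    simpa using FFProof.richState_flatten k L.get (List.finRange L.length) []
  have hinv := FFProof.inv_richState k L.get hsz (List.finRange L.length) []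
    (by simp [FFProof.Inv])
  have hFF := FFProof.length_le_itemWgt k L.get h0 h1 (by omega) hsz bs hinv
    (hperm.nodup_iff.2 (List.nodup_finRange _))
  rw [(hperm.map _).sum_eq] at hFF
  have hsumeq : ((List.finRange L.length).map (FFProof.itemWgt k L.get h bs)).sum =
      ∑ i, FFProof.itemWgt k L.get h bs i := by
    rw [← List.ofFn_eq_map, List.sum_ofFn]
  have hOPT : ∑ i, FFProof.itemWgt k L.get h bs i ≤ (binsUsed L f : ℝ) * (2.7 - 3 / k) := by
    rw [← Finset.sum_fiberwise_of_maps_to (t := Finset.univ.image f) (g := f)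
      (fun i hi => Finset.mem_image_of_mem f hi)]
    refine (Finset.sum_le_card_nsmul _ _ (2.7 - 3 / (k : ℝ)) fun b _ => ?_).trans ?_
    · exact FFProof.sum_itemWgt_bin k L.get h0 h1 hk hht hth hsz bs _ (hf b).1 (hf b).2
    · rw [nsmul_eq_mul]
      rfl
  have hlen : FF k L = bs.length := by rw [FF, hstate, List.length_map]
  rw [hlen, ← hfO]
  rw [hsumeq] at hFF
  linarith
end
end

section
/- For every k ∈ {2, 3, 4} and every N, there exists an input list L such that OPT(L) ≥ N and FF(L) ≥ (2.5 − 2/k)·OPT(L), where FF is First Fit with cardinality constraint k. Consequently, the asymptotic competitive ratio of First Fit for k ∈ {2,3,4} is at least 2.5 − 2/k. -/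
/-!
Write `k = c + 2` and let `M = 2 * k * m`. The input consists of `c * M` tiny items, then `M` items
slightly smaller than `1/2`, then `M` items slightly larger than `1/2`, with sizes such that `c` tiny
items, one middle item and one large item together just fit into a bin.

* First Fit packs the tiny items `k` to a bin, the middle items two to a bin and the large items one
  to a bin, and no item ever fits into a bin left over from an earlier phase. This gives
  `c * M / k + M / 2 + M = (5/2 - 2/k) * M` bins (`FF_hardInput`, through `foldl_ffUpdate_blocks`).
* Sending item `i` to bin `i % M` is feasible, so `OPT ≤ M` (`OPT_hardInput_le`); two large items
  cannot share a bin, so `OPT ≥ M` (`le_OPT_hardInput`).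
-/

open scoped Classical
noncomputable section

/-! ### First Fit on blocks of equal items -/

/-- Bin `b` cannot receive an item of size `x`. -/
def ClosedFor (k : ℕ) (x : ℝ) (b : ℕ × ℝ) : Prop := ¬ (b.1 < k ∧ b.2 + x ≤ 1)

lemma ffUpdate_append {k : ℕ} {x : ℝ} {bs : List (ℕ × ℝ)} (h : ∀ b ∈ bs, ClosedFor k x b)
    (cs : List (ℕ × ℝ)) : ffUpdate k x (bs ++ cs) = bs ++ ffUpdate k x cs := by
  induction bs with
  | nil => rfl
  | cons b bs ih =>
    have hb : ¬ (b.1 < k ∧ b.2 + x ≤ 1) := h b (by simp)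
    simp only [List.cons_append, ffUpdate, if_neg hb]
    rw [ih fun b' hb' => h b' (by simp [hb'])]

lemma foldl_ffUpdate_one_bin {k : ℕ} {x : ℝ} (hx : 0 ≤ x) {bs : List (ℕ × ℝ)}
    (h : ∀ b ∈ bs, ClosedFor k x b) (c : ℕ) (hck : c + 1 ≤ k) (hc : ((c + 1 : ℕ) : ℝ) * x ≤ 1) :
    (List.replicate (c + 1) x).foldl (fun bs x => ffUpdate k x bs) bs
      = bs ++ [(c + 1, ((c + 1 : ℕ) : ℝ) * x)] := by
  induction c with
  | zero =>
    have := ffUpdate_append h []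
    simpa [ffUpdate] using this
  | succ c ih =>
    push_cast at hc ih ⊢
    rw [List.replicate_succ', List.foldl_append, ih (by omega) (by nlinarith)]
    simp only [List.foldl_cons, List.foldl_nil]
    rw [ffUpdate_append h]
    have : (c + 1 < k ∧ ((c : ℝ) + 1) * x + x ≤ 1) := ⟨by omega, by linarith⟩
    simp only [ffUpdate, if_pos this]
    congr 3
    ring

/-- If every open bin is closed for items of size `x`, then `(c + 1) * j` such items fill exactly `j`
new bins, provided `c + 1` is the number of items at which a bin of such items becomes closed. -/
lemma foldl_ffUpdate_blocks {k : ℕ} {x : ℝ} (hx : 0 ≤ x) {bs : List (ℕ × ℝ)}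
    (h : ∀ b ∈ bs, ClosedFor k x b) (c : ℕ) (hck : c + 1 ≤ k) (hc : ((c + 1 : ℕ) : ℝ) * x ≤ 1)
    (hcl : ClosedFor k x (c + 1, ((c + 1 : ℕ) : ℝ) * x)) (j : ℕ) :
    (List.replicate ((c + 1) * j) x).foldl (fun bs x => ffUpdate k x bs) bs
      = bs ++ List.replicate j (c + 1, ((c + 1 : ℕ) : ℝ) * x) := by
  induction j with
  | zero => simp
  | succ j ih =>
    rw [Nat.mul_succ, List.replicate_add, List.foldl_append, ih, foldl_ffUpdate_one_bin hx _ c hck hc,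
      List.replicate_succ', List.append_assoc]
    intro b hb
    rcases List.mem_append.1 hb with hb | hb
    · exact h b hb
    · rw [List.eq_of_mem_replicate hb]
      exact hcl

/-! ### The hard input -/

/-- `c * M` items of size `e`, then `M` items of size `a`, then `M` items of size `b`. -/
def hardInput (c M : ℕ) (e a b : ℝ) : List ℝ :=
  List.replicate (c * M) e ++ (List.replicate M a ++ List.replicate M b)

lemma hardInput_length (c M : ℕ) (e a b : ℝ) : (hardInput c M e a b).length = (c + 2) * M := by
  simp [hardInput]
  ring

/-- The size of the items at positions `t * M, …, (t + 1) * M - 1` of `hardInput c M e a b`. -/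
def blockSize (c : ℕ) (e a b : ℝ) (t : ℕ) : ℝ := if t < c then e else if t < c + 1 then a else b

lemma hardInput_get (c M : ℕ) (e a b : ℝ) (hM : 0 < M) (i : Fin (hardInput c M e a b).length) :
    (hardInput c M e a b).get i = blockSize c e a b (i.1 / M) := by
  have h1 : i.1 / M < c ↔ i.1 < c * M := Nat.div_lt_iff_lt_mul hM
  have h2 : i.1 / M < c + 1 ↔ i.1 < (c + 1) * M := Nat.div_lt_iff_lt_mul hM
  rw [Nat.succ_mul] at h2
  simp only [blockSize, h1, h2]
  obtain ⟨i, hi⟩ := i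
  simp only [List.get_eq_getElem, hardInput, List.getElem_append, List.getElem_replicate,
    List.length_replicate]
  split_ifs <;> first | rfl | omega

lemma sum_blockSize (c : ℕ) (e a b : ℝ) :
    ∑ t ∈ Finset.range (c + 2), blockSize c e a b t = c * e + a + b := by
  rw [Finset.sum_range_succ, Finset.sum_range_succ]
  have : ∑ t ∈ Finset.range c, blockSize c e a b t = ∑ t ∈ Finset.range c, e :=
    Finset.sum_congr rfl fun t ht => by simp [blockSize, Finset.mem_range.1 ht]
  rw [this]
  simp [blockSize]

/-- Sending item `i` to bin `i % M` puts exactly one item of each block into each bin. -/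
lemma mod_packing_feasible (c M : ℕ) (e a b : ℝ) (hM : 0 < M) (he : 0 ≤ e) (ha : 0 ≤ a) (hb : 0 ≤ b)
    (hsum : c * e + a + b ≤ 1) :
    IsFeasible (c + 2) (hardInput c M e a b) (fun i => i.1 % M) := by
  intro d
  have hinj : Set.InjOn (fun i : Fin (hardInput c M e a b).length => i.1 / M)
      (Finset.univ.filter fun i : Fin (hardInput c M e a b).length => i.1 % M = d) := by
    intro i hi j hj hij
    simp only [Finset.coe_filter, Finset.mem_univ, true_and, Set.mem_ofPred_eq] at hi hj hij
    apply Fin.ext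
    rw [← Nat.div_add_mod i.1 M, ← Nat.div_add_mod j.1 M, hi, hj, hij]
  have hsub : (Finset.univ.filter fun i : Fin (hardInput c M e a b).length => i.1 % M = d).image
      (fun i => i.1 / M) ⊆ Finset.range (c + 2) := by
    intro t ht
    obtain ⟨i, -, rfl⟩ := Finset.mem_image.1 ht
    rw [Finset.mem_range, Nat.div_lt_iff_lt_mul hM, ← hardInput_length c M e a b]
    exact i.2
  constructor
  · have := Finset.card_le_card hsub
    rwa [Finset.card_image_of_injOn hinj, Finset.card_range] at this
  · rw [Finset.sum_congr rfl fun i _ => hardInput_get c M e a b hM i,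
      ← Finset.sum_image (f := blockSize c e a b) hinj]
    refine (Finset.sum_le_sum_of_subset_of_nonneg hsub ?_).trans ((sum_blockSize c e a b).trans_le hsum)
    intro t _ _
    unfold blockSize
    split_ifs <;> assumption

lemma OPT_hardInput_le (c M : ℕ) (e a b : ℝ) (hM : 0 < M) (he : 0 ≤ e) (ha : 0 ≤ a) (hb : 0 ≤ b)
    (hsum : c * e + a + b ≤ 1) : OPT (c + 2) (hardInput c M e a b) ≤ M := by
  refine le_trans (Nat.sInf_le ⟨_, mod_packing_feasible c M e a b hM he ha hb hsum, rfl⟩) ?_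
  rw [← Finset.card_range M]
  refine Finset.card_le_card fun t ht => ?_
  obtain ⟨i, -, rfl⟩ := Finset.mem_image.1 ht
  simpa using Nat.mod_lt _ hM

/-- No two of the `M` items of size `b > 1/2` share a bin in a feasible packing. -/
lemma le_OPT_hardInput (c M : ℕ) (e a b : ℝ) (hM : 0 < M) (he : 0 ≤ e) (ha : 0 ≤ a) (hb : 1 / 2 < b)
    (hsum : c * e + a + b ≤ 1) : M ≤ OPT (c + 2) (hardInput c M e a b) := by
  refine le_csInf
    ⟨_, _, mod_packing_feasible c M e a b hM he ha (by linarith) hsum, rfl⟩ ?_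
  rintro n ⟨f, hf, rfl⟩
  let g : Fin M → Fin (hardInput c M e a b).length := fun j =>
    ⟨(c + 1) * M + j.1, by
      rw [hardInput_length]
      have := j.2
      nlinarith⟩
  have hg : ∀ j, (hardInput c M e a b).get (g j) = b := by
    intro j
    rw [hardInput_get _ _ _ _ _ hM]
    have : (g j).1 / M = c + 1 := by
      simp only [g]
      rw [mul_comm, Nat.mul_add_div hM, Nat.div_eq_of_lt j.2, add_zero]
    simp [this, blockSize]
  have hinj : Function.Injective fun j => f (g j) := by
    intro i j hij
    by_contra hne
    have hne' : g i ≠ g j := fun h => hne (Fin.ext (by simpa [g] using h))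
    have hle := (hf (f (g j))).2
    have hsub : ({g i, g j} : Finset _) ⊆ Finset.univ.filter fun t => f t = f (g j) := by
      intro t ht
      rcases Finset.mem_insert.1 ht with rfl | ht
      · simpa using hij
      · simp [Finset.mem_singleton.1 ht]
    have hpair := Finset.sum_le_sum_of_subset_of_nonneg (f := (hardInput c M e a b).get) hsub
      fun t _ _ => by
        rw [hardInput_get _ _ _ _ _ hM]
        unfold blockSize
        split_ifs <;> linarith
    rw [Finset.sum_pair hne', hg, hg] at hpair
    linarith
  calc M = (Finset.univ.image fun j => f (g j)).card := by
        rw [Finset.card_image_of_injective _ hinj, Finset.card_univ, Fintype.card_fin]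
    _ ≤ _ := Finset.card_le_card fun t ht => by
        obtain ⟨j, -, rfl⟩ := Finset.mem_image.1 ht
        exact Finset.mem_image_of_mem _ (Finset.mem_univ _)

/-- First Fit uses `2 * c * m` bins for the tiny, `(c + 2) * m` for the middle and `2 * (c + 2) * m`
for the large items. -/
lemma FF_hardInput (c m : ℕ) (e a b : ℝ) (he : 0 ≤ e) (hke : ((c : ℝ) + 2) * e ≤ 1)
    (ha : 1 / 3 < a) (ha' : a ≤ 1 / 2) (hb : 1 / 2 < b) (hb' : b ≤ 1) :
    FF (c + 2) (hardInput c (2 * (c + 2) * m) e a b) = (5 * c + 6) * m := by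
  -- Bins with `k = c + 2` items are closed for every size.
  have hfull : ∀ x s, ClosedFor (c + 2) x (c + 1 + 1, s) := by
    intro x s h
    have := h.1
    simp at this
  have h1 := foldl_ffUpdate_blocks (k := c + 2) he (bs := []) (by simp) (c + 1) le_rfl
    (by push_cast; linarith) (hfull _ _) (2 * c * m)
  set S1 := List.replicate (2 * c * m) (c + 1 + 1, ((c + 1 + 1 : ℕ) : ℝ) * e) with hS1
  have hS1cl : ∀ x, ∀ d ∈ S1, ClosedFor (c + 2) x d := by
    intro x d hd
    rw [List.eq_of_mem_replicate hd]
    exact hfull _ _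
  have h2 := foldl_ffUpdate_blocks (k := c + 2) (x := a) (by linarith) (hS1cl a) 1 (by omega)
    (by push_cast; linarith)
    (by
      intro h
      have := h.2
      push_cast at this
      linarith) ((c + 2) * m)
  set S2 := List.replicate ((c + 2) * m) (1 + 1, ((1 + 1 : ℕ) : ℝ) * a) with hS2
  have h3 := foldl_ffUpdate_blocks (k := c + 2) (x := b) (by linarith) (bs := S1 ++ S2)
    (by
      intro d hd
      rcases List.mem_append.1 hd with hd | hd
      · exact hS1cl b d hd
      · rw [List.eq_of_mem_replicate hd]
        intro h
        have := h.2
        push_cast at this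
        linarith) 0 (by omega)
    (by push_cast; linarith)
    (by
      intro h
      have := h.2
      push_cast at this
      linarith) (2 * (c + 2) * m)
  have e1 : c * (2 * (c + 2) * m) = (c + 1 + 1) * (2 * c * m) := by ring
  have e2 : 2 * (c + 2) * m = (1 + 1) * ((c + 2) * m) := by ring
  rw [zero_add, one_mul] at h3
  rw [← e2] at h2
  rw [FF, ffState, hardInput, e1, List.foldl_append, List.foldl_append, h1, List.nil_append, h2, h3]
  simp only [List.length_append, hS1, hS2, List.length_replicate]
  ring

/-- The lower bound in fact holds for every `k = c + 2 ≥ 2`. -/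
lemma exists_hard_input (c N : ℕ) :
    ∃ L : List ℝ, ValidInput L ∧ N ≤ OPT (c + 2) L ∧
      ((2.5 : ℝ) - 2 / ((c + 2 : ℕ) : ℝ)) * (OPT (c + 2) L : ℝ) ≤ (FF (c + 2) L : ℝ) := by
  have hc : (0 : ℝ) < (c : ℝ) + 2 := by positivity
  -- The tiny size is `1 / (10 * k)`, so that all tiny items of an optimal bin sum to less than `1/10`.
  obtain ⟨e, he⟩ : ∃ e : ℝ, e = 1 / (10 * ((c : ℝ) + 2)) := ⟨_, rfl⟩
  have he0 : 0 < e := by rw [he]; positivity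
  have hke : ((c : ℝ) + 2) * e = 1 / 10 := by rw [he]; field_simp
  have hce : 0 ≤ (c : ℝ) * e := by positivity
  obtain ⟨b, hb⟩ : ∃ b : ℝ, b = 3 / 5 - c * e := ⟨_, rfl⟩
  have hb0 : 1 / 2 < b := by linarith
  have hM : 0 < 2 * (c + 2) * (N + 1) := by positivity
  have hO : OPT (c + 2) (hardInput c (2 * (c + 2) * (N + 1)) e (2 / 5) b)
      = 2 * (c + 2) * (N + 1) :=
    le_antisymm
      (OPT_hardInput_le _ _ _ _ _ hM he0.le (by norm_num) (by linarith) (by linarith))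
      (le_OPT_hardInput _ _ _ _ _ hM he0.le (by norm_num) hb0 (by linarith))
  refine ⟨hardInput c (2 * (c + 2) * (N + 1)) e (2 / 5) b, ?_, ?_, ?_⟩
  · intro x hx
    simp only [hardInput, List.mem_append, List.mem_replicate] at hx
    rcases hx with ⟨-, rfl⟩ | ⟨-, rfl⟩ | ⟨-, rfl⟩
    · constructor
      · exact he0
      · nlinarith
    · norm_num
    · constructor <;> linarith
  · rw [hO]
    nlinarith
  · rw [hO, FF_hardInput c (N + 1) e (2 / 5) b he0.le (by linarith) (by norm_num) (by norm_num) hb0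
      (by linarith)]
    push_cast
    apply le_of_eq
    field_simp
    ring

/-- For k ∈ {2,3,4} and every N there is an input `L` with OPT(L) ≥ N
and FF(L) ≥ (2.5 − 2/k)·OPT(L): the asymptotic competitive ratio of First Fit for
k ∈ {2,3,4} is at least 2.5 − 2/k. -/
theorem ff_lb_small_k (k : ℕ) (hk : k = 2 ∨ k = 3 ∨ k = 4) (N : ℕ) :
    ∃ L : List ℝ, ValidInput L ∧ N ≤ OPT k L ∧
      ((2.5 : ℝ) - 2 / k) * (OPT k L : ℝ) ≤ (FF k L : ℝ) := by
  rcases hk with rfl | rfl | rfl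
  · exact exists_hard_input 0 N
  · exact exists_hard_input 1 N
  · exact exists_hard_input 2 N
end
end
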